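/- arXiv:2210.09280 — 3 statements merged into one kernel-verified Lean document; each statement's English description precedes it below -/
import Mathlib

section
/- Log-Rule for the disk. There is an absolute constant C ≥ 1 such that for all disjoint closed arcs I, J of the unit circle S¹, each of positive normalized arc length, with d := dist(I, J) > 0, the inner width W_D(I, J) over the closed unit disk D satisfies: if d ≤ min(|I|, |J|), then C⁻¹·(log(min(|I|,|J|)/d) + 1) ≤ W_D(I, J) ≤ C·(log(min(|I|,|J|)/d) + 1); and if d ≥ min(|I|, |J|), then C⁻¹·(log(d/min(|I|,|J|)) + 1)⁻¹ ≤ W_D(I, J) ≤ C·(log(d/min(|I|,|J|)) + 1)⁻¹. -/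
noncomputable section

open MeasureTheory Set Metric Bornology
open scoped ENNReal NNReal

/-- A curve: continuous on `[0,1]` and continuously differentiable on `(0,1)`. -/
def IsCurve (γ : ℝ → ℂ) : Prop :=
  ContinuousOn γ (Icc 0 1) ∧ ContDiffOn ℝ 1 γ (Ioo 0 1)

/-- The extremal width of a family of curves: the infimum of `∫ ρ² dA` over all Borel
measurable metrics `ρ : ℂ → [0,∞]` that give every curve of the family length at least `1`
(the infimum over the empty set being `∞`). -/
def extremalWidth (F : Set (ℝ → ℂ)) : ℝ≥0∞ :=
  ⨅ ρ ∈ {ρ : ℂ → ℝ≥0∞ | Measurable ρ ∧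
      ∀ γ ∈ F, 1 ≤ ∫⁻ t in Ioo (0:ℝ) 1, ρ (γ t) * (‖deriv γ t‖₊ : ℝ≥0∞)},
    ∫⁻ z, ρ z ^ 2

/-- The curves contained in `S`, starting in `X` and ending in `Y`. -/
def curveFamily (S X Y : Set ℂ) : Set (ℝ → ℂ) :=
  {γ : ℝ → ℂ | IsCurve γ ∧ (∀ t ∈ Icc (0:ℝ) 1, γ t ∈ S) ∧ γ 0 ∈ X ∧ γ 1 ∈ Y}

/-- The extremal width `W_S(X, Y)`. -/
def widthIn (S X Y : Set ℂ) : ℝ≥0∞ := extremalWidth (curveFamily S X Y)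

/-- The point `e^{2πit}` of the unit circle. -/
def unitCirc (t : ℝ) : ℂ := Complex.exp (2 * Real.pi * Complex.I * t)

/-- The Log-Rule bounds: `W ≍ log(m/d) + 1` when `d ≤ m`, and `W ≍ (log(d/m) + 1)⁻¹`
when `d ≥ m`, with comparison constant `C`. -/
def logBounds (C m d : ℝ) (W : ℝ≥0∞) : Prop :=
  (d ≤ m → ENNReal.ofReal (C⁻¹ * (Real.log (m / d) + 1)) ≤ W ∧
      W ≤ ENNReal.ofReal (C * (Real.log (m / d) + 1))) ∧
  (m ≤ d → ENNReal.ofReal (C⁻¹ * (Real.log (d / m) + 1)⁻¹) ≤ W ∧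
      W ≤ ENNReal.ofReal (C * (Real.log (d / m) + 1)⁻¹))


/-- The radial length estimate. -/
lemma radial_length {γ : ℝ → ℂ} (hγ : IsCurve γ) {p : ℂ} {r R : ℝ} (hr : 0 ≤ r) (hrR : r < R)
    (h0 : ‖γ 0 - p‖ ≤ r) (h1 : R ≤ ‖γ 1 - p‖) {G k : ℝ → ℝ}
    (hG : ContinuousOn G (Icc r R)) (hG' : ∀ u ∈ Ioo r R, HasDerivAt G (k u) u)
    (hk : ContinuousOn k (Ioo r R)) (hk0 : ∀ u ∈ Ioo r R, 0 ≤ k u)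
    {ρ : ℂ → ℝ≥0∞} (hρ : ∀ z, r < ‖z - p‖ → ‖z - p‖ < R → ENNReal.ofReal (k ‖z - p‖) ≤ ρ z) :
    ENNReal.ofReal (G R - G r) ≤ ∫⁻ t in Ioo (0:ℝ) 1, ρ (γ t) * (‖deriv γ t‖₊ : ℝ≥0∞) := by
  obtain ⟨hc, hd⟩ := hγ
  set f : ℝ → ℝ := fun t => ‖γ t - p‖ with hf
  have hfc : ContinuousOn f (Icc 0 1) := (hc.sub continuousOn_const).norm
  -- last time below r
  have hA : IsCompact (Icc (0:ℝ) 1 ∩ f ⁻¹' Iic r) :=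
    isCompact_Icc.of_isClosed_subset
      (hfc.preimage_isClosed_of_isClosed isClosed_Icc isClosed_Iic) inter_subset_left
  obtain ⟨t0, ht0, ht0max⟩ := hA.exists_isGreatest ⟨0, ⟨by simp, h0⟩⟩
  have hB : IsCompact (Icc t0 (1:ℝ) ∩ f ⁻¹' Ici R) :=
    isCompact_Icc.of_isClosed_subset
      ((hfc.mono (Icc_subset_Icc ht0.1.1 le_rfl)).preimage_isClosed_of_isClosed isClosed_Icc
      isClosed_Ici) inter_subset_left
  obtain ⟨t1, ht1, ht1min⟩ := hB.exists_isLeast ⟨1, ⟨⟨ht0.1.2, le_rfl⟩, h1⟩⟩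
  have ht00 : 0 ≤ t0 := ht0.1.1
  have ht11 : t1 ≤ 1 := ht1.1.2
  have hft0 : f t0 ≤ r := ht0.2
  have hft1 : R ≤ f t1 := ht1.2
  have ht01 : t0 < t1 := by
    rcases ht1.1.1.eq_or_lt with h | h
    · rw [← h] at hft1; linarith
    · exact h
  have hlow : ∀ t, t0 < t → t ≤ 1 → r < f t := by
    intro t h h'
    by_contra hcon
    have := ht0max ⟨⟨by linarith, h'⟩, not_lt.1 hcon⟩
    linarith
  have hup : ∀ t, t0 ≤ t → t < t1 → f t < R := by
    intro t h h'
    by_contra hcon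
    have := ht1min ⟨⟨h, by linarith⟩, not_lt.1 hcon⟩
    linarith
  have hfc' : ContinuousOn f (Icc t0 t1) := hfc.mono (Icc_subset_Icc ht00 ht11)
  have hmemcl : ∀ t ∈ Icc t0 t1, f t ∈ Icc r R := by
    have : ∀ t ∈ closure (Ioo t0 t1), f t ∈ Icc r R := by
      have h2 : MapsTo f (Ioo t0 t1) (Icc r R) := fun t ht =>
        ⟨(hlow t ht.1 (ht.2.le.trans ht11)).le, (hup t ht.1.le ht.2).le⟩
      have h3 := h2.closure_of_continuousOn (by rwa [closure_Ioo ht01.ne])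
      rw [isClosed_Icc.closure_eq] at h3
      exact h3
    rwa [closure_Ioo ht01.ne] at this
  have e0 : f t0 = r := le_antisymm hft0 (hmemcl t0 (left_mem_Icc.2 ht01.le)).1
  have e1 : f t1 = R := le_antisymm (hmemcl t1 (right_mem_Icc.2 ht01.le)).2 hft1
  have hsub : Ioo t0 t1 ⊆ Ioo 0 1 := Ioo_subset_Ioo ht00 ht11
  have hIoo : ∀ t ∈ Ioo t0 t1, f t ∈ Ioo r R := fun t ht =>
    ⟨hlow t ht.1 (ht.2.le.trans ht11), hup t ht.1.le ht.2⟩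
  have hγd : ∀ t ∈ Ioo (0:ℝ) 1, HasDerivAt γ (deriv γ t) t := fun t ht =>
    ((hd.differentiableOn one_ne_zero).differentiableAt (Ioo_mem_nhds ht.1 ht.2)).hasDerivAt
  have hγdc : ContinuousOn (deriv γ) (Ioo 0 1) := hd.continuousOn_deriv_of_isOpen isOpen_Ioo le_rfl
  have hfd : ∀ t ∈ Ioo t0 t1, ∃ f', HasDerivAt f f' t ∧ |f'| ≤ ‖deriv γ t‖ := by
    intro t ht
    have h1 := hγd t (hsub ht)
    have hne : γ t - p ≠ 0 := by
      have := (hIoo t ht).1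
      intro h
      simp only [hf, h, norm_zero] at this
      linarith
    have h3 : DifferentiableAt ℝ f t :=
      DifferentiableAt.norm ℝ (h1.differentiableAt.sub_const p) hne
    refine ⟨_, h3.hasDerivAt, ?_⟩
    have hL := (hasDerivAt_iff_tendsto_slope.1 h3.hasDerivAt).norm
    have hM := (hasDerivAt_iff_tendsto_slope.1 h1).norm
    refine le_of_tendsto_of_tendsto' hL hM fun y => ?_
    rw [slope_def_module, slope_def_module, norm_smul, norm_smul]
    refine mul_le_mul_of_nonneg_left ?_ (norm_nonneg _)
    have := abs_norm_sub_norm_le (γ y - p) (γ t - p)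
    simpa [hf] using this
  set φ : ℝ → ℝ := fun t => k (f t) * ‖deriv γ t‖ with hφ
  have hφc : ContinuousOn φ (Ioo t0 t1) :=
    (hk.comp (hfc'.mono Ioo_subset_Icc_self) hIoo).mul (hγdc.mono hsub).norm
  have hle : ∫⁻ t in Ioo t0 t1, ENNReal.ofReal (φ t) ≤
      ∫⁻ t in Ioo (0:ℝ) 1, ρ (γ t) * (‖deriv γ t‖₊ : ℝ≥0∞) := by
    refine le_trans ?_ (lintegral_mono_set hsub)
    refine setLIntegral_mono' measurableSet_Ioo fun t ht => ?_
    rw [hφ, ENNReal.ofReal_mul (hk0 _ (hIoo t ht)), ofReal_norm]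
    exact mul_le_mul' (hρ _ (hIoo t ht).1 (hIoo t ht).2) le_rfl
  refine le_trans ?_ hle
  by_cases htop : ∫⁻ t in Ioo t0 t1, ENNReal.ofReal (φ t) = ∞
  · rw [htop]; exact le_top
  have hφ0 : ∀ t ∈ Ioo t0 t1, 0 ≤ φ t := fun t ht => mul_nonneg (hk0 _ (hIoo t ht)) (norm_nonneg _)
  have hinteg : IntegrableOn φ (Ioo t0 t1) := by
    refine ⟨hφc.aestronglyMeasurable measurableSet_Ioo, ?_⟩
    rw [hasFiniteIntegral_iff_ofReal]
    · exact lt_top_iff_ne_top.2 htop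
    · exact (ae_restrict_iff' measurableSet_Ioo).2 (Filter.Eventually.of_forall hφ0)
  choose! f' hf' hf'le using hfd
  have key := intervalIntegral.sub_le_integral_of_hasDeriv_right_of_le (g := G ∘ f)
    (g' := fun t => k (f t) * f' t) (φ := φ) ht01.le (hG.comp hfc' hmemcl)
    (fun t ht => ((hG' _ (hIoo t ht)).comp t (hf' t ht)).hasDerivWithinAt)
    ((integrableOn_Icc_iff_integrableOn_Ioo (by simp) (by simp)).2 hinteg)
    (fun t ht => mul_le_mul_of_nonneg_left ((le_abs_self _).trans (hf'le t ht))
      (hk0 _ (hIoo t ht)))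
  simp only [Function.comp, e0, e1] at key
  rw [intervalIntegral.integral_of_le ht01.le, integral_Ioc_eq_integral_Ioo] at key
  rw [← ofReal_integral_eq_lintegral_ofReal hinteg
    ((ae_restrict_iff' measurableSet_Ioo).2 (Filter.Eventually.of_forall hφ0))]
  exact ENNReal.ofReal_le_ofReal key

lemma lint_inv_shift {x y c : ℝ} (hxy : x ≤ y) (hc : 0 < x + c) :
    ∫⁻ u in Ioc x y, ENNReal.ofReal (u + c)⁻¹ = ENNReal.ofReal (Real.log ((y + c) / (x + c))) := by
  have hcont : ContinuousOn (fun u : ℝ => (u + c)⁻¹) (Icc x y) := by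
    refine ContinuousOn.inv₀ (by fun_prop) fun u hu => ?_
    have := hu.1
    linarith
  have hinteg : IntegrableOn (fun u : ℝ => (u + c)⁻¹) (Ioc x y) :=
    (hcont.integrableOn_Icc).mono_set Ioc_subset_Icc_self
  rw [← ofReal_integral_eq_lintegral_ofReal hinteg]
  · rw [← intervalIntegral.integral_of_le hxy,
      intervalIntegral.integral_comp_add_right (fun u : ℝ => u⁻¹) c, integral_inv_of_pos hc]
    linarith
  · refine (ae_restrict_iff' measurableSet_Ioc).2 (Filter.Eventually.of_forall fun u hu => ?_)
    have := hu.1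
    exact inv_nonneg.2 (by linarith)

lemma lint_radial (p : ℂ) {F : ℝ → ℝ≥0∞} (hF : Measurable F) :
    ∫⁻ z : ℂ, F ‖z - p‖ = ENNReal.ofReal (2 * Real.pi) * ∫⁻ u in Ioi (0:ℝ), ENNReal.ofReal u * F u := by
  rw [lintegral_sub_right_eq_self (fun z : ℂ => F ‖z‖) p, ← Complex.lintegral_comp_polarCoord_symm]
  rw [polarCoord_target, Measure.volume_eq_prod, ← Measure.prod_restrict]
  rw [lintegral_congr_ae (g := fun q : ℝ × ℝ => (ENNReal.ofReal q.1 * F q.1) * 1)]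
  · rw [lintegral_prod_mul (f := fun u : ℝ => ENNReal.ofReal u * F u) (g := fun _ : ℝ => 1)
      (by fun_prop) (by fun_prop)]
    simp only [lintegral_const, Measure.restrict_apply MeasurableSet.univ, univ_inter, one_mul,
      Real.volume_Ioo]
    rw [mul_comm]; congr 2; ring
  · rw [Measure.prod_restrict]
    refine (ae_restrict_iff' (measurableSet_Ioi.prod measurableSet_Ioo)).2
      (Filter.Eventually.of_forall fun q hq => ?_)
    have h : (0:ℝ) < q.1 := hq.1
    simp only [Complex.norm_polarCoord_symm, abs_of_pos h, smul_eq_mul, mul_one]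

lemma extremalWidth_le {F : Set (ℝ → ℂ)} {ρ : ℂ → ℝ≥0∞} (hρ : Measurable ρ)
    (h : ∀ γ ∈ F, 1 ≤ ∫⁻ t in Ioo (0:ℝ) 1, ρ (γ t) * (‖deriv γ t‖₊ : ℝ≥0∞)) :
    extremalWidth F ≤ ∫⁻ z, ρ z ^ 2 :=
  iInf₂_le ρ ⟨hρ, h⟩

lemma upper_far {S X Y : Set ℂ} {p : ℂ} {r R : ℝ} (hr : 0 < r) (hrR : r < R)
    (hX : ∀ x ∈ X, ‖x - p‖ ≤ r) (hY : ∀ y ∈ Y, R ≤ ‖y - p‖) :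
    widthIn S X Y ≤ ENNReal.ofReal (2 * Real.pi / Real.log (R / r)) := by
  set l := Real.log (R / r) with hl
  have hl0 : 0 < l := Real.log_pos (by rw [lt_div_iff₀ hr]; linarith)
  set F : ℝ → ℝ≥0∞ := (Ioc r R).indicator fun u => ENNReal.ofReal (u⁻¹ / l) with hF
  have hFm : Measurable F := by
    refine Measurable.indicator ?_ measurableSet_Ioc
    fun_prop
  refine (extremalWidth_le (ρ := fun z => F ‖z - p‖) (by fun_prop) ?_).trans ?_
  · rintro γ ⟨hγ, -, h0, h1⟩
    have := radial_length hγ hr.le hrR (hX _ h0) (hY _ h1) (G := fun u => Real.log u / l)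
      (k := fun u => u⁻¹ / l) (ρ := fun z => F ‖z - p‖) ?_ ?_ ?_ ?_ ?_
    · refine le_trans (le_of_eq ?_) this
      rw [← sub_div, ← Real.log_div (by linarith) hr.ne', ← hl, div_self hl0.ne', ENNReal.ofReal_one]
    · refine ContinuousOn.div_const (Real.continuousOn_log.mono fun u hu => ?_) _
      have := hu.1
      simp; linarith
    · intro u hu
      have := hu.1
      exact (Real.hasDerivAt_log (by linarith)).div_const _
    · refine ContinuousOn.div_const (ContinuousOn.inv₀ (by fun_prop) fun u hu => ?_) _
      have := hu.1
      linarith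
    · intro u hu
      have := hu.1
      exact div_nonneg (inv_nonneg.2 (by linarith)) hl0.le
    · intro z h2 h3
      rw [hF, indicator_of_mem (show ‖z - p‖ ∈ Ioc r R from ⟨h2, h3.le⟩)]
  · rw [lint_radial p (F := fun u => F u ^ 2) (by fun_prop)]
    have : ∫⁻ u in Ioi (0:ℝ), ENNReal.ofReal u * F u ^ 2
        = ∫⁻ u in Ioc r R, ENNReal.ofReal (1 / l ^ 2) * ENNReal.ofReal (u + 0)⁻¹ := by
      rw [← lintegral_indicator measurableSet_Ioi, ← lintegral_indicator measurableSet_Ioc]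
      refine lintegral_congr fun u => ?_
      by_cases hu : u ∈ Ioc r R
      · have hu0 : 0 < u := hr.trans hu.1
        rw [indicator_of_mem (show u ∈ Ioi (0:ℝ) from hu0), indicator_of_mem hu, hF,
          indicator_of_mem hu, ← ENNReal.ofReal_pow (by positivity),
          ← ENNReal.ofReal_mul hu0.le, ← ENNReal.ofReal_mul (by positivity)]
        congr 1
        simp only [add_zero]
        field_simp
      · rw [indicator_of_notMem hu]
        simp [indicator, hF, hu]
    rw [this, lintegral_const_mul' _ _ ENNReal.ofReal_ne_top,
      lint_inv_shift hrR.le (by linarith), ← ENNReal.ofReal_mul (by positivity),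
      ← ENNReal.ofReal_mul (by positivity)]
    refine ENNReal.ofReal_le_ofReal (le_of_eq ?_)
    simp only [add_zero, ← hl]
    field_simp

lemma upper_near {S X Y : Set ℂ} {p q : ℂ} {d m : ℝ} (hd : 0 < d) (hdm : d ≤ m)
    (hX : ∀ x ∈ X, ‖x - p‖ ≤ 7 * m ∧ ‖x - q‖ ≤ 7 * m)
    (hXY : ∀ x ∈ X, ∀ y ∈ Y, (‖x - p‖ + d) / 2 ≤ ‖y - x‖ ∨ (‖x - q‖ + d) / 2 ≤ ‖y - x‖) :
    widthIn S X Y ≤ ENNReal.ofReal (72 * Real.pi * Real.log (13 * m / d)) := by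
  set F : ℝ → ℝ≥0∞ := (Iic (12 * m)).indicator fun u => ENNReal.ofReal (3 / (u + d)) with hF
  have hFm : Measurable F := by
    refine Measurable.indicator ?_ measurableSet_Iic
    fun_prop
  have hm : 0 < m := hd.trans_le hdm
  have key : ∀ (p x y : ℂ) (γ : ℝ → ℂ), IsCurve γ → γ 0 = x → γ 1 = y → ‖x - p‖ ≤ 7 * m →
      (‖x - p‖ + d) / 2 ≤ ‖y - x‖ → 
      1 ≤ ∫⁻ t in Ioo (0:ℝ) 1, F ‖γ t - p‖ * (‖deriv γ t‖₊ : ℝ≥0∞) := by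
    intro p x y γ hγ h0 h1 hx hy
    have hxp := norm_nonneg (x - p)
    have := radial_length hγ (p := x) (r := 0) (R := (‖x - p‖ + d) / 2) le_rfl (by positivity)
      (by simp [h0]) (by rw [h1]; exact hy) (G := fun u => (2 / (‖x - p‖ + d)) * u)
      (k := fun u => 2 / (‖x - p‖ + d)) (ρ := fun z => F ‖z - p‖) (by fun_prop) ?_ (by fun_prop) ?_ ?_
    · refine le_trans (le_of_eq ?_) this
      rw [← ENNReal.ofReal_one]
      congr 1
      field_simp
      simp
    · intro u _
      simpa using (hasDerivAt_id u).const_mul (2 / (‖x - p‖ + d))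
    · intro u _
      positivity
    · intro z _ h3
      have h4 : ‖z - p‖ ≤ ‖z - x‖ + ‖x - p‖ := norm_sub_le_norm_sub_add_norm_sub z x p
      have h5 := norm_nonneg (z - p)
      rw [hF, indicator_of_mem (show ‖z - p‖ ∈ Iic (12 * m) from by simp only [mem_Iic]; linarith)]
      refine ENNReal.ofReal_le_ofReal ?_
      rw [div_le_div_iff₀ (by positivity) (by positivity)]
      linarith
  have hI : ∀ p : ℂ, ∫⁻ z, F ‖z - p‖ ^ 2 ≤ ENNReal.ofReal (18 * Real.pi * Real.log (13 * m / d)) := by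
    intro p
    rw [lint_radial p (F := fun u => F u ^ 2) (by fun_prop)]
    have : ∫⁻ u in Ioi (0:ℝ), ENNReal.ofReal u * F u ^ 2
        ≤ ∫⁻ u in Ioc 0 (12 * m), ENNReal.ofReal 9 * ENNReal.ofReal (u + d)⁻¹ := by
      rw [← lintegral_indicator measurableSet_Ioi, ← lintegral_indicator measurableSet_Ioc]
      refine lintegral_mono fun u => ?_
      by_cases hu : u ∈ Ioc 0 (12 * m)
      · have hu0 : 0 < u := hu.1
        rw [indicator_of_mem (show u ∈ Ioi (0:ℝ) from hu0), indicator_of_mem hu, hF,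
          indicator_of_mem (show u ∈ Iic (12 * m) from hu.2), ← ENNReal.ofReal_pow (by positivity),
          ← ENNReal.ofReal_mul hu0.le, ← ENNReal.ofReal_mul (by positivity)]
        refine ENNReal.ofReal_le_ofReal ?_
        rw [div_pow, ← mul_div_assoc, ← div_eq_mul_inv, div_le_div_iff₀ (by positivity) (by positivity)]
        nlinarith [mul_pos hu0 hd, sq_nonneg d, mul_pos (mul_pos hu0 hd) hd, pow_pos hd 3]
      · rw [indicator_of_notMem hu]
        by_cases hu0 : 0 < u
        · have : ¬ u ≤ 12 * m := fun h => hu ⟨hu0, h⟩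
          simp [indicator, hF, this]
        · simp [indicator, hu0]
    refine (mul_le_mul' le_rfl this).trans ?_
    rw [lintegral_const_mul' _ _ ENNReal.ofReal_ne_top,
      lint_inv_shift (by positivity) (by linarith), ← ENNReal.ofReal_mul (by positivity),
      ← ENNReal.ofReal_mul (by positivity)]
    refine ENNReal.ofReal_le_ofReal ?_
    have : Real.log ((12 * m + d) / (0 + d)) ≤ Real.log (13 * m / d) := by
      refine Real.log_le_log (by positivity) ?_
      rw [zero_add]
      exact div_le_div_of_nonneg_right (by linarith) hd.le
    nlinarith [Real.pi_pos]
  refine (extremalWidth_le (ρ := fun z => F ‖z - p‖ + F ‖z - q‖) (by fun_prop) ?_).trans ?_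
  · rintro γ ⟨hγ, -, h0, h1⟩
    rcases hXY _ h0 _ h1 with h | h
    · refine (key p _ _ γ hγ rfl rfl (hX _ h0).1 h).trans (lintegral_mono fun t => ?_)
      exact mul_le_mul' le_self_add le_rfl
    · refine (key q _ _ γ hγ rfl rfl (hX _ h0).2 h).trans (lintegral_mono fun t => ?_)
      exact mul_le_mul' le_add_self le_rfl
  · calc ∫⁻ z, (F ‖z - p‖ + F ‖z - q‖) ^ 2
        ≤ ∫⁻ z, (2 * F ‖z - p‖ ^ 2 + 2 * F ‖z - q‖ ^ 2) := by
          refine lintegral_mono fun z => ?_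
          have := ENNReal.rpow_add_le_mul_rpow_add_rpow (F ‖z - p‖) (F ‖z - q‖) (p := 2) (by norm_num)
          have h21 : (2:ℝ) - 1 = 1 := by norm_num
          simpa only [h21, ENNReal.rpow_one, ENNReal.rpow_two, mul_add] using this
      _ ≤ 2 * ENNReal.ofReal (18 * Real.pi * Real.log (13 * m / d)) +
          2 * ENNReal.ofReal (18 * Real.pi * Real.log (13 * m / d)) := by
          rw [lintegral_add_left (by fun_prop), lintegral_const_mul _ (by fun_prop),
            lintegral_const_mul _ (by fun_prop)]
          exact add_le_add (mul_le_mul' le_rfl (hI p)) (mul_le_mul' le_rfl (hI q))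
      _ ≤ _ := by
          rw [← two_mul, ← mul_assoc]
          have : (2 * 2 : ℝ≥0∞) = ENNReal.ofReal 4 := by norm_num
          rw [this, ← ENNReal.ofReal_mul (by norm_num)]
          refine ENNReal.ofReal_le_ofReal (le_of_eq (by ring))

lemma refl01 (f : ℝ → ℝ≥0∞) :
    ∫⁻ t in Ioo (0:ℝ) 1, f (1 - t) = ∫⁻ t in Ioo (0:ℝ) 1, f t := by
  have h := (Measure.measurePreserving_sub_left (volume : Measure ℝ) 1).setLIntegral_comp_preimage_emb
    (MeasurableEquiv.subLeft (1:ℝ)).measurableEmbedding f (Ioo 0 1)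
  simpa using h

lemma widthIn_symm_le (S X Y : Set ℂ) : widthIn S X Y ≤ widthIn S Y X := by
  refine le_iInf₂ fun ρ hρ => extremalWidth_le hρ.1 fun γ hγ => ?_
  obtain ⟨⟨hc, hd⟩, hS, h0, h1⟩ := hγ
  have h := hρ.2 (fun t => γ (1 - t)) ⟨⟨?_, ?_⟩, ?_, by simpa using h1, by simpa using h0⟩
  · refine h.trans (le_of_eq ?_)
    rw [← refl01 (fun t => ρ (γ t) * (‖deriv γ t‖₊ : ℝ≥0∞))]
    refine lintegral_congr fun t => ?_
    rw [deriv_comp_const_sub, nnnorm_neg]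
  · refine hc.comp (by fun_prop) fun t ht => ⟨by linarith [ht.2], by linarith [ht.1]⟩
  · exact hd.comp (by fun_prop) fun t ht => ⟨by linarith [ht.2], by linarith [ht.1]⟩
  · intro t ht
    exact hS _ ⟨by linarith [ht.2], by linarith [ht.1]⟩

lemma widthIn_symm (S X Y : Set ℂ) : widthIn S X Y = widthIn S Y X :=
  le_antisymm (widthIn_symm_le _ _ _) (widthIn_symm_le _ _ _)

lemma amgm_ennreal (r : ℝ≥0∞) {n c K : ℝ} (hc : 0 < c) (hK : n ^ 2 ≤ K) :
    r * ENNReal.ofReal n ≤ ENNReal.ofReal c * r ^ 2 + ENNReal.ofReal (K / (4 * c)) := by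
  induction r with
  | top =>
    rw [ENNReal.top_pow two_ne_zero, ENNReal.mul_top (by simpa using hc)]
    simp
  | coe x =>
    have hK0 : 0 ≤ K := (sq_nonneg n).trans hK
    have hx : (x : ℝ≥0∞) = ENNReal.ofReal (x : ℝ) := (ENNReal.ofReal_coe_nnreal).symm
    rw [hx, ← ENNReal.ofReal_pow x.coe_nonneg, ← ENNReal.ofReal_mul x.coe_nonneg, ← ENNReal.ofReal_mul hc.le,
      ← ENNReal.ofReal_add (by positivity) (by positivity)]
    refine ENNReal.ofReal_le_ofReal ?_
    have h1 : (x:ℝ) * n ≤ c * x ^ 2 + n ^ 2 / (4 * c) := by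
      rw [← sub_nonneg]
      have : c * (x:ℝ) ^ 2 + n ^ 2 / (4 * c) - x * n = (2 * c * x - n) ^ 2 / (4 * c) := by
        field_simp; ring
      rw [this]; positivity
    have h2 : n ^ 2 / (4 * c) ≤ K / (4 * c) := by gcongr
    linarith

/-- The height function of the parabolas. -/
def hgt (φ0 R φ : ℝ) : ℝ := φ0 / 8 + R / 8 * (φ - φ0)

/-- The family of parabolas. -/
def Par (φ0 R : ℝ) (q : ℝ × ℝ) : ℝ × ℝ :=
  (Real.cos q.1 - 4 * hgt φ0 R q.1 * q.2 * (1 - q.2), (2 * q.2 - 1) * Real.sin q.1)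

/-- The derivative of the family of parabolas. -/
def dPar (φ0 R : ℝ) (q : ℝ × ℝ) : ℝ × ℝ →L[ℝ] ℝ × ℝ :=
  (Matrix.toLin (Module.Basis.finTwoProd ℝ) (Module.Basis.finTwoProd ℝ)
    !![-Real.sin q.1 - R / 2 * q.2 * (1 - q.2), -4 * hgt φ0 R q.1 * (1 - 2 * q.2);
      (2 * q.2 - 1) * Real.cos q.1, 2 * Real.sin q.1]).toContinuousLinearMap

/-- The Jacobian of the family of parabolas. -/
def Jac (φ0 R : ℝ) (q : ℝ × ℝ) : ℝ :=
  2 * Real.sin q.1 ^ 2 + R * q.2 * (1 - q.2) * Real.sin q.1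
    + 4 * hgt φ0 R q.1 * (2 * q.2 - 1) ^ 2 * Real.cos q.1

lemma hasFDerivAt_Par (φ0 R : ℝ) (q : ℝ × ℝ) : HasFDerivAt (Par φ0 R) (dPar φ0 R q) q := by
  unfold dPar
  rw [Matrix.toLin_finTwoProd_toContinuousLinearMap]
  have h1 : HasFDerivAt (fun q : ℝ × ℝ => q.1) (ContinuousLinearMap.fst ℝ ℝ ℝ) q := hasFDerivAt_fst
  have h2 : HasFDerivAt (fun q : ℝ × ℝ => q.2) (ContinuousLinearMap.snd ℝ ℝ ℝ) q := hasFDerivAt_snd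
  have hh : HasFDerivAt (fun q : ℝ × ℝ => hgt φ0 R q.1) ((R / 8) • ContinuousLinearMap.fst ℝ ℝ ℝ) q :=
    ((h1.sub_const φ0).const_mul (R / 8)).const_add (φ0 / 8)
  have hA := (h1.cos).sub (((hh.const_mul 4).mul h2).mul (h2.const_sub 1))
  have hB := ((h2.const_mul 2).sub_const 1).mul h1.sin
  convert! HasFDerivAt.prodMk (𝕜 := ℝ) hA hB using 2
  · ext <;> simp <;> ring
  · ext <;> simp <;> ring

lemma det_dPar (φ0 R : ℝ) (q : ℝ × ℝ) : (dPar φ0 R q).det = - Jac φ0 R q := by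
  unfold dPar Jac
  simp only [LinearMap.det_toContinuousLinearMap, LinearMap.det_toLin, Matrix.det_fin_two_of]
  ring


lemma hgt_facts {φ0 A R : ℝ} (h0 : 0 < φ0) (hA : φ0 + A ≤ Real.pi / 2)
    (hR : 1 ≤ R) (hRA : (R - 1) * A ≤ φ0) {φ : ℝ} (hφ : φ ∈ Ioo φ0 (φ0 + A)) :
    0 < φ ∧ φ < Real.pi / 2 ∧ φ / 16 ≤ hgt φ0 R φ ∧ hgt φ0 R φ ≤ φ / 4 ∧ hgt φ0 R φ ≤ 1 / 2 ∧
    0 < Real.sin φ ∧ 0 < Real.cos φ ∧ φ / 2 ≤ Real.sin φ := by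
  obtain ⟨h1, h2⟩ := hφ
  have hp := Real.pi_lt_d2
  have hp' := Real.pi_pos
  have hx : (R - 1) * (φ - φ0) ≤ φ0 :=
    (mul_le_mul_of_nonneg_left (by linarith) (by linarith)).trans hRA
  have hx' : 0 ≤ (R - 1) * (φ - φ0) := mul_nonneg (by linarith) (by linarith)
  have e : hgt φ0 R φ = φ / 8 + (R - 1) * (φ - φ0) / 8 := by unfold hgt; ring
  have hs : φ / 2 ≤ Real.sin φ := by
    refine le_trans ?_ (Real.mul_le_sin (by linarith) (by linarith))
    rw [div_mul_eq_mul_div, div_le_div_iff₀ (by norm_num) hp']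
    nlinarith
  refine ⟨by linarith, by linarith, by linarith, by linarith, by linarith, by linarith, ?_, hs⟩
  exact Real.cos_pos_of_mem_Ioo ⟨by linarith, by linarith⟩

lemma Jac_lower {φ0 A R : ℝ} (h0 : 0 < φ0) (hA : φ0 + A ≤ Real.pi / 2)
    (hR : 1 ≤ R) (hRA : (R - 1) * A ≤ φ0) {φ t : ℝ} (hφ : φ ∈ Ioo φ0 (φ0 + A))
    (ht : t ∈ Ioo (0:ℝ) 1) : φ / 16 * (1 + 4 * R * t * (1 - t)) ≤ Jac φ0 R (φ, t) := by
  obtain ⟨f1, f2, f3, f4, f5, f6, f7, f8⟩ := hgt_facts h0 hA hR hRA hφ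
  unfold Jac
  simp only
  generalize hgt φ0 R φ = h at *
  have hsc := Real.sin_sq_add_cos_sq φ
  have hc1 := Real.cos_le_one φ
  generalize Real.sin φ = s at *
  generalize Real.cos φ = c at *
  have hw : 0 < t * (1 - t) := mul_pos ht.1 (by linarith [ht.2])
  have hw1 : t * (1 - t) ≤ 1 / 4 := by nlinarith [sq_nonneg (2 * t - 1)]
  have e : (2 * t - 1) ^ 2 = 1 - 4 * (t * (1 - t)) := by ring
  rw [e, show R * t * (1 - t) = R * (t * (1 - t)) by ring,
    show 4 * R * t * (1 - t) = 4 * R * (t * (1 - t)) by ring]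
  generalize t * (1 - t) = w at *
  have hsc1 : 1 ≤ s ^ 2 + c := by nlinarith
  have k1 : 4 * h * (1 - 4 * w) ≤ 2 * s ^ 2 + 4 * h * (1 - 4 * w) * c := by
    have a1 : 0 ≤ 4 * h * (1 - 4 * w) := mul_nonneg (by linarith) (by linarith)
    have a2 : 4 * h * (1 - 4 * w) ≤ 2 := by nlinarith
    nlinarith [mul_le_mul_of_nonneg_left hsc1 a1, mul_le_mul_of_nonneg_right a2 (sq_nonneg s)]
  have k2 : φ / 4 * (1 - 4 * w) ≤ 4 * h * (1 - 4 * w) :=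
    mul_le_mul_of_nonneg_right (by linarith) (by linarith)
  have k3 : R * w * (φ / 2) ≤ R * w * s := mul_le_mul_of_nonneg_left f8 (by positivity)
  have k4 : 0 ≤ φ * (3 - 16 * w + 4 * (R * w)) := by
    refine mul_nonneg f1.le ?_
    nlinarith
  nlinarith

lemma injOn_Par {φ0 A R : ℝ} (h0 : 0 < φ0) (hA : φ0 + A ≤ Real.pi / 2)
    (hR : 1 ≤ R) (hRA : (R - 1) * A ≤ φ0) :
    InjOn (Par φ0 R) (Ioo φ0 (φ0 + A) ×ˢ Ioo 0 1) := by
  have key : ∀ φ ∈ Ioo φ0 (φ0 + A), ∀ ψ ∈ Ioo φ0 (φ0 + A), ∀ t ∈ Ioo (0:ℝ) 1, ∀ u ∈ Ioo (0:ℝ) 1,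
      φ < ψ → Par φ0 R (φ, t) = Par φ0 R (ψ, u) → False := by
    intro φ hφ ψ hψ t ht u hu hlt heq
    obtain ⟨f1, f2, f3, f4, f5, f6, f7, f8⟩ := hgt_facts h0 hA hR hRA hφ
    obtain ⟨g1, g2, g3, g4, g5, g6, g7, g8⟩ := hgt_facts h0 hA hR hRA hψ
    simp only [Par, Prod.mk.injEq] at heq
    obtain ⟨e1, e2⟩ := heq
    have hcos : Real.cos ψ < Real.cos φ :=
      Real.cos_lt_cos_of_nonneg_of_le_pi f1.le (by linarith [Real.pi_pos]) hlt
    have hsin : Real.sin φ < Real.sin ψ :=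
      Real.sin_lt_sin_of_lt_of_le_pi_div_two (by linarith [Real.pi_pos]) g2.le hlt
    have hh : hgt φ0 R φ ≤ hgt φ0 R ψ := by unfold hgt; nlinarith
    have hsq : (2 * u - 1) ^ 2 ≤ (2 * t - 1) ^ 2 := by
      have : |2 * u - 1| ≤ |2 * t - 1| := by
        have e3 : |2 * t - 1| * Real.sin φ = |2 * u - 1| * Real.sin ψ := by
          rw [← abs_of_pos f6, ← abs_of_pos g6, ← abs_mul, ← abs_mul, e2]
        by_contra hcon
        nlinarith [abs_nonneg (2 * t - 1)]
      exact sq_le_sq.2 this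
    have hw : t * (1 - t) ≤ u * (1 - u) := by nlinarith
    have hw0 : 0 < t * (1 - t) := mul_pos ht.1 (by linarith [ht.2])
    have := mul_le_mul hh hw hw0.le (by linarith)
    nlinarith
  rintro ⟨φ, t⟩ ⟨hφ, ht⟩ ⟨ψ, u⟩ ⟨hψ, hu⟩ heq
  have hφψ : φ = ψ := by
    rcases lt_trichotomy φ ψ with h | h | h
    · exact (key φ hφ ψ hψ t ht u hu h heq).elim
    · exact h
    · exact (key ψ hψ φ hφ u hu t ht h heq.symm).elim
  subst hφψ
  obtain ⟨f1, f2, f3, f4, f5, f6, f7, f8⟩ := hgt_facts h0 hA hR hRA hφ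
  simp only [Par, Prod.mk.injEq] at heq
  have := mul_right_cancel₀ f6.ne' heq.2
  ext
  · rfl
  · simp only; linarith

lemma par_integral {R : ℝ} (hR : 1 ≤ R) :
    ∫⁻ t in Ioo (0:ℝ) 1, ENNReal.ofReal (1 + 4 * R * t * (1 - t))⁻¹
      ≤ ENNReal.ofReal (2 * Real.log (1 + R) / R) := by
  have hR0 : 0 < R := by linarith
  have hl : 0 < Real.log (1 + R) := Real.log_pos (by linarith)
  have e1 : ∫⁻ t in Ioo (0:ℝ) 1, ENNReal.ofReal (1 + R * t)⁻¹ = ENNReal.ofReal (Real.log (1 + R) / R) := by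
    rw [setLIntegral_congr Ioo_ae_eq_Ioc]
    have : ∀ t : ℝ, ENNReal.ofReal (1 + R * t)⁻¹ = ENNReal.ofReal R⁻¹ * ENNReal.ofReal (t + R⁻¹)⁻¹ := by
      intro t
      rw [← ENNReal.ofReal_mul (by positivity), ← mul_inv, mul_add, mul_inv_cancel₀ hR0.ne', add_comm]
    simp_rw [this]
    rw [lintegral_const_mul' _ _ ENNReal.ofReal_ne_top, lint_inv_shift zero_le_one (by positivity),
      ← ENNReal.ofReal_mul (by positivity)]
    congr 1
    rw [show (1 + R⁻¹) / (0 + R⁻¹) = 1 + R by field_simp; ring]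
    field_simp
  calc _ ≤ ∫⁻ t in Ioo (0:ℝ) 1,
        (ENNReal.ofReal (1 + R * t)⁻¹ + ENNReal.ofReal (1 + R * (1 - t))⁻¹) := by
        refine setLIntegral_mono' measurableSet_Ioo fun t ht => ?_
        have t0 : 0 < t := ht.1
        have t1 : 0 < 1 - t := by linarith [ht.2]
        rw [← ENNReal.ofReal_add (by positivity) (by positivity)]
        refine ENNReal.ofReal_le_ofReal ?_
        rw [inv_add_inv (by positivity) (by positivity), inv_eq_one_div,
          div_le_div_iff₀ (by positivity) (by positivity)]
        nlinarith [mul_pos t0 t1, mul_pos hR0 (mul_pos t0 t1), mul_pos hR0 (mul_pos hR0 (mul_pos t0 t1))]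
    _ = _ := by
        rw [lintegral_add_left (by fun_prop), refl01 (fun t => ENNReal.ofReal (1 + R * t)⁻¹), e1,
          ← ENNReal.ofReal_add (by positivity) (by positivity)]
        congr 1; ring

/-- Lower bound for a single parabola. -/
lemma slice_lower {X Y : Set ℂ} {e : ℂ} (he : ‖e‖ = 1) {φ0 A R : ℝ} (h0 : 0 < φ0)
    (hA : φ0 + A ≤ Real.pi / 2) (hR : 1 ≤ R) (hRA : (R - 1) * A ≤ φ0) {φ : ℝ}
    (hφ : φ ∈ Ioo φ0 (φ0 + A))
    (hX : e * (Real.cos φ + (-Real.sin φ : ℝ) * Complex.I) ∈ X)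
    (hY : e * (Real.cos φ + (Real.sin φ : ℝ) * Complex.I) ∈ Y)
    {ρ : ℂ → ℝ≥0∞} (hρm : Measurable ρ)
    (hρ : ∀ γ ∈ curveFamily (closedBall 0 1) X Y,
      1 ≤ ∫⁻ t in Ioo (0:ℝ) 1, ρ (γ t) * (‖deriv γ t‖₊ : ℝ≥0∞)) :
    ENNReal.ofReal (R / (160 * Real.log (1 + R)) * φ⁻¹) ≤
      ∫⁻ t in Ioo (0:ℝ) 1, ENNReal.ofReal (Jac φ0 R (φ, t)) *
        ρ (e * ((Par φ0 R (φ, t)).1 + (Par φ0 R (φ, t)).2 * Complex.I)) ^ 2 := by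
  obtain ⟨f1, f2, f3, f4, f5, f6, f7, f8⟩ := hgt_facts h0 hA hR hRA hφ
  have hl : 0 < Real.log (1 + R) := Real.log_pos (by linarith)
  have hR0 : 0 < R := by linarith
  set γ : ℝ → ℂ := fun t => e * ((Par φ0 R (φ, t)).1 + (Par φ0 R (φ, t)).2 * Complex.I) with hγ
  set h := hgt φ0 R φ with hh
  have hγd : ∀ t, HasDerivAt γ
      (e * (((-(4 * h * (1 - 2 * t)) : ℝ) : ℂ) + ((2 * Real.sin φ : ℝ) : ℂ) * Complex.I)) t := by
    intro t
    have d1 : HasDerivAt (fun t : ℝ => (Par φ0 R (φ, t)).1) (-(4 * h * (1 - 2 * t))) t := by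
      have := ((((hasDerivAt_id t).const_mul (4 * h)).mul ((hasDerivAt_id t).const_sub 1))).const_sub
        (Real.cos φ)
      simp only [Par]
      convert! this using 1
      simp; ring
    have d2 : HasDerivAt (fun t : ℝ => (Par φ0 R (φ, t)).2) (2 * Real.sin φ) t := by
      have := (((hasDerivAt_id t).const_mul 2).sub_const 1).mul_const (Real.sin φ)
      simp only [Par]
      convert! this using 1
      simp
    exact ((d1.ofReal_comp).add ((d2.ofReal_comp).mul_const Complex.I)).const_mul e
  have hγcd : ContDiff ℝ 1 γ := by
    have a1 : ContDiff ℝ 1 fun t : ℝ => (((Par φ0 R (φ, t)).1 : ℝ) : ℂ) :=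
      Complex.ofRealCLM.contDiff.comp
        (show ContDiff ℝ 1 fun t : ℝ => Real.cos φ - 4 * h * t * (1 - t) by fun_prop)
    have a2 : ContDiff ℝ 1 fun t : ℝ => (((Par φ0 R (φ, t)).2 : ℝ) : ℂ) :=
      Complex.ofRealCLM.contDiff.comp
        (show ContDiff ℝ 1 fun t : ℝ => (2 * t - 1) * Real.sin φ by fun_prop)
    exact contDiff_const.mul (a1.add (a2.mul contDiff_const))
  have hmem : γ ∈ curveFamily (closedBall 0 1) X Y := by
    refine ⟨⟨hγcd.continuous.continuousOn, hγcd.contDiffOn⟩, ?_, ?_, ?_⟩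
    · intro t ht
      rw [mem_closedBall_zero_iff, hγ, norm_mul, he, one_mul, ← sq_le_one_iff₀ (norm_nonneg _),
        Complex.sq_norm, Complex.normSq_add_mul_I]
      simp only [Par, ← hh]
      have hsc := Real.sin_sq_add_cos_sq φ
      have hc1 := Real.cos_le_one φ
      have hw : 0 ≤ t * (1 - t) := mul_nonneg ht.1 (by linarith [ht.2])
      have hw1 : t * (1 - t) ≤ 1 / 4 := by nlinarith [sq_nonneg (2 * t - 1)]
      have e1 : (Real.cos φ - 4 * h * t * (1 - t)) ^ 2 + ((2 * t - 1) * Real.sin φ) ^ 2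
          = 1 - 4 * (t * (1 - t)) * (Real.sin φ ^ 2 + 2 * h * Real.cos φ - 4 * h ^ 2 * (t * (1 - t))) := by
        linear_combination hsc
      rw [e1]
      have hsc1 : 1 ≤ Real.sin φ ^ 2 + Real.cos φ := by nlinarith
      have k : 0 ≤ Real.sin φ ^ 2 + 2 * h * Real.cos φ - 4 * h ^ 2 * (t * (1 - t)) := by
        have k1 : 4 * h ^ 2 * (t * (1 - t)) ≤ h ^ 2 := by nlinarith [sq_nonneg h]
        have k2 : h ^ 2 ≤ 2 * h := by nlinarith
        nlinarith [mul_le_mul_of_nonneg_left hsc1 (show 0 ≤ 2 * h by linarith), sq_nonneg (Real.sin φ)]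
      nlinarith [mul_nonneg hw k]
    · have : γ 0 = e * (Real.cos φ + (-Real.sin φ : ℝ) * Complex.I) := by
        simp [hγ, Par]
      rwa [this]
    · have : γ 1 = e * (Real.cos φ + (Real.sin φ : ℝ) * Complex.I) := by
        simp only [hγ, Par]; norm_num
      rwa [this]
  have hone := hρ γ hmem
  set B : ℝ := 160 * φ * Real.log (1 + R) / R with hB
  have hB0 : 0 < B := by positivity
  set a := ∫⁻ t in Ioo (0:ℝ) 1, ENNReal.ofReal (Jac φ0 R (φ, t)) * ρ (γ t) ^ 2 with ha
  have hpt : ∀ t ∈ Ioo (0:ℝ) 1, ρ (γ t) * (‖deriv γ t‖₊ : ℝ≥0∞) ≤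
      ENNReal.ofReal (B / 2) * (ENNReal.ofReal (Jac φ0 R (φ, t)) * ρ (γ t) ^ 2) +
      ENNReal.ofReal (40 * φ / B) * ENNReal.ofReal (1 + 4 * R * t * (1 - t))⁻¹ := by
    intro t ht
    have t0 : 0 < t := ht.1
    have t1 : 0 < 1 - t := by linarith [ht.2]
    have hJ := Jac_lower h0 hA hR hRA hφ ht
    have hJ1 : 0 < φ / 16 * (1 + 4 * R * t * (1 - t)) := by positivity
    have hJ0 : 0 < Jac φ0 R (φ, t) := hJ1.trans_le hJ
    have hn : ‖deriv γ t‖ ^ 2 ≤ 5 * φ ^ 2 := by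
      rw [(hγd t).deriv, norm_mul, he, one_mul, Complex.sq_norm, Complex.normSq_add_mul_I]
      have hs : Real.sin φ ≤ φ := Real.sin_le f1.le
      have m1 : Real.sin φ ^ 2 ≤ φ ^ 2 := by gcongr
      have m2 : h ^ 2 ≤ (φ / 4) ^ 2 := pow_le_pow_left₀ (by linarith) f4 2
      have m3 : (1 - 2 * t) ^ 2 ≤ 1 := by nlinarith
      have m4 : h ^ 2 * (1 - 2 * t) ^ 2 ≤ (φ / 4) ^ 2 * 1 := by gcongr
      nlinarith
    have := amgm_ennreal (ρ (γ t)) (c := B / 2 * Jac φ0 R (φ, t)) (by positivity) hn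
    rw [ofReal_norm, ENNReal.ofReal_mul (by positivity), mul_assoc] at this
    refine this.trans (add_le_add le_rfl ?_)
    rw [← ENNReal.ofReal_mul (by positivity)]
    refine ENNReal.ofReal_le_ofReal ?_
    calc 5 * φ ^ 2 / (4 * (B / 2 * Jac φ0 R (φ, t)))
        ≤ 5 * φ ^ 2 / (4 * (B / 2 * (φ / 16 * (1 + 4 * R * t * (1 - t))))) := by gcongr
      _ = 40 * φ / B * (1 + 4 * R * t * (1 - t))⁻¹ := by field_simp; norm_num
  have hparm : Measurable fun t : ℝ => ENNReal.ofReal (Jac φ0 R (φ, t)) * ρ (γ t) ^ 2 := by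
    have : Measurable fun t : ℝ => Jac φ0 R (φ, t) := by unfold Jac hgt; fun_prop
    have h2 : Measurable fun t : ℝ => ρ (γ t) := hρm.comp hγcd.continuous.measurable
    exact this.ennreal_ofReal.mul (h2.pow_const 2)
  have hsum : (1:ℝ≥0∞) ≤ ENNReal.ofReal (B / 2) * a + ENNReal.ofReal (1 / 2) := by
    refine (hone.trans (setLIntegral_mono' measurableSet_Ioo hpt)).trans ?_
    rw [lintegral_add_left (hparm.const_mul _), lintegral_const_mul' _ _ ENNReal.ofReal_ne_top,
      lintegral_const_mul' _ _ ENNReal.ofReal_ne_top]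
    refine add_le_add le_rfl ((mul_le_mul' le_rfl (par_integral hR)).trans ?_)
    rw [← ENNReal.ofReal_mul (by positivity)]
    refine ENNReal.ofReal_le_ofReal (le_of_eq ?_)
    rw [hB]; field_simp; norm_num
  have hhalf : ENNReal.ofReal (1 / 2) ≤ ENNReal.ofReal (B / 2) * a := by
    have h1 : (1:ℝ≥0∞) = ENNReal.ofReal (1 / 2) + ENNReal.ofReal (1 / 2) := by
      rw [← ENNReal.ofReal_add (by norm_num) (by norm_num)]; norm_num
    rw [h1] at hsum
    exact (ENNReal.add_le_add_iff_right ENNReal.ofReal_ne_top).1 hsum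
  calc ENNReal.ofReal (R / (160 * Real.log (1 + R)) * φ⁻¹)
      = ENNReal.ofReal (2 / B) * ENNReal.ofReal (1 / 2) := by
        rw [← ENNReal.ofReal_mul (by positivity), hB]
        congr 1; field_simp
    _ ≤ ENNReal.ofReal (2 / B) * (ENNReal.ofReal (B / 2) * a) := mul_le_mul' le_rfl hhalf
    _ = a := by
        rw [← mul_assoc, ← ENNReal.ofReal_mul (by positivity)]
        rw [show 2 / B * (B / 2) = 1 by field_simp, ENNReal.ofReal_one, one_mul]

lemma lower_bound {X Y : Set ℂ} {e : ℂ} (he : ‖e‖ = 1) {φ0 A R : ℝ} (h0 : 0 < φ0) (hA0 : 0 < A)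
    (hA : φ0 + A ≤ Real.pi / 2) (hR : 1 ≤ R) (hRA : (R - 1) * A ≤ φ0)
    (hX : ∀ φ ∈ Ioo φ0 (φ0 + A), e * (Real.cos φ + (-Real.sin φ : ℝ) * Complex.I) ∈ X)
    (hY : ∀ φ ∈ Ioo φ0 (φ0 + A), e * (Real.cos φ + (Real.sin φ : ℝ) * Complex.I) ∈ Y) :
    ENNReal.ofReal (R / (160 * Real.log (1 + R)) * Real.log (1 + A / φ0)) ≤
      widthIn (closedBall 0 1) X Y := by
  refine le_iInf₂ fun ρ hρ => ?_
  obtain ⟨hρm, hρ⟩ := hρ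
  have hl : 0 < Real.log (1 + R) := Real.log_pos (by linarith)
  set E : ℝ × ℝ → ℂ := fun q => e * (q.1 + q.2 * Complex.I) with hE
  have hEm : Measurable E := by
    have : Continuous E := by rw [hE]; fun_prop
    exact this.measurable
  have hEint : ∫⁻ z, ρ z ^ 2 = ∫⁻ q, ρ (E q) ^ 2 := by
    let r := rotation (⟨e, mem_sphere_zero_iff_norm.2 he⟩ : Circle)
    rw [← r.measurePreserving.lintegral_comp (by fun_prop),
      ← (Complex.volume_preserving_equiv_real_prod.symm).lintegral_comp (by fun_prop)]
    refine lintegral_congr fun q => ?_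
    congr 2
    change e * (Complex.mk q.1 q.2) = e * (q.1 + q.2 * Complex.I)
    congr 1
    apply Complex.ext <;> simp
  have hS : MeasurableSet (Ioo φ0 (φ0 + A) ×ˢ Ioo (0:ℝ) 1) := measurableSet_Ioo.prod measurableSet_Ioo
  have hcv := lintegral_image_eq_lintegral_abs_det_fderiv_mul volume hS
    (fun q _ => (hasFDerivAt_Par φ0 R q).hasFDerivWithinAt) (injOn_Par h0 hA hR hRA)
    (fun q => ρ (E q) ^ 2)
  have hJm : Measurable fun q : ℝ × ℝ => Jac φ0 R q := by unfold Jac hgt; fun_prop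
  have hPm : Measurable fun q : ℝ × ℝ => Par φ0 R q := by unfold Par hgt; fun_prop
  calc ENNReal.ofReal (R / (160 * Real.log (1 + R)) * Real.log (1 + A / φ0))
      = ∫⁻ φ in Ioo φ0 (φ0 + A), ENNReal.ofReal (R / (160 * Real.log (1 + R)) * φ⁻¹) := by
        have : ∀ φ : ℝ, ENNReal.ofReal (R / (160 * Real.log (1 + R)) * φ⁻¹) =
            ENNReal.ofReal (R / (160 * Real.log (1 + R))) * ENNReal.ofReal (φ + 0)⁻¹ := by
          intro φ
          rw [← ENNReal.ofReal_mul (by positivity), add_zero]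
        simp_rw [this]
        rw [lintegral_const_mul' _ _ ENNReal.ofReal_ne_top, setLIntegral_congr Ioo_ae_eq_Ioc,
          lint_inv_shift (by linarith) (by linarith), ← ENNReal.ofReal_mul (by positivity)]
        congr 3
        field_simp
        ring
    _ ≤ ∫⁻ φ in Ioo φ0 (φ0 + A), ∫⁻ t in Ioo (0:ℝ) 1,
          ENNReal.ofReal (Jac φ0 R (φ, t)) * ρ (E (Par φ0 R (φ, t))) ^ 2 := by
        refine setLIntegral_mono' measurableSet_Ioo fun φ hφ => ?_
        exact slice_lower he h0 hA hR hRA hφ (hX φ hφ) (hY φ hφ) hρm hρ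
    _ = ∫⁻ q in Ioo φ0 (φ0 + A) ×ˢ Ioo (0:ℝ) 1,
          ENNReal.ofReal (Jac φ0 R q) * ρ (E (Par φ0 R q)) ^ 2 := by
        rw [Measure.volume_eq_prod, ← Measure.prod_restrict, lintegral_prod]
        have : Measurable fun q : ℝ × ℝ => ρ (E (Par φ0 R q)) := hρm.comp (hEm.comp hPm)
        fun_prop
    _ = ∫⁻ q in Ioo φ0 (φ0 + A) ×ˢ Ioo (0:ℝ) 1,
          ENNReal.ofReal |(dPar φ0 R q).det| * ρ (E (Par φ0 R q)) ^ 2 := by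
        refine setLIntegral_congr_fun hS fun q hq => ?_
        have hJ := Jac_lower h0 hA hR hRA hq.1 hq.2
        have hJ1 : 0 ≤ q.1 / 16 * (1 + 4 * R * q.2 * (1 - q.2)) := by
          have a1 : 0 < q.1 := h0.trans hq.1.1
          have a2 : 0 < q.2 := hq.2.1
          have a3 : 0 < 1 - q.2 := by linarith [hq.2.2]
          positivity
        rw [det_dPar, abs_neg, abs_of_nonneg (hJ1.trans hJ)]
    _ = ∫⁻ q in Par φ0 R '' (Ioo φ0 (φ0 + A) ×ˢ Ioo (0:ℝ) 1), ρ (E q) ^ 2 := hcv.symm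
    _ ≤ ∫⁻ q, ρ (E q) ^ 2 := setLIntegral_le_lintegral _ _
    _ = ∫⁻ z, ρ z ^ 2 := hEint.symm

lemma unitCirc_eq (t : ℝ) : unitCirc t =
    Real.cos (2 * Real.pi * t) + (Real.sin (2 * Real.pi * t) : ℝ) * Complex.I := by
  unfold unitCirc
  rw [Complex.ofReal_cos, Complex.ofReal_sin, ← Complex.exp_mul_I]
  congr 1; push_cast; ring

lemma unitCirc_add (t u : ℝ) : unitCirc (t + u) = unitCirc t * unitCirc u := by
  unfold unitCirc
  rw [← Complex.exp_add]
  congr 1; push_cast; ring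

lemma unitCirc_one : unitCirc 1 = 1 := by
  rw [unitCirc_eq]; simp

lemma norm_unitCirc (t : ℝ) : ‖unitCirc t‖ = 1 := by
  unfold unitCirc
  rw [show 2 * (Real.pi : ℂ) * Complex.I * t = ((2 * Real.pi * t : ℝ) : ℂ) * Complex.I by
    push_cast; ring]
  exact Complex.norm_exp_ofReal_mul_I _

lemma norm_unitCirc_sub (t u : ℝ) : ‖unitCirc t - unitCirc u‖ = 2 * |Real.sin (Real.pi * (t - u))| := by
  have h : unitCirc t - unitCirc u = unitCirc u * (unitCirc (t - u) - 1) := by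
    rw [mul_sub, ← unitCirc_add]; simp
  rw [h, norm_mul, norm_unitCirc, one_mul]
  have h2 := Complex.norm_exp_I_mul_ofReal_sub_one (2 * Real.pi * (t - u))
  have h3 : unitCirc (t - u) = Complex.exp (Complex.I * ((2 * Real.pi * (t - u) : ℝ) : ℂ)) := by
    unfold unitCirc; congr 1; push_cast; ring
  rw [h3, h2, norm_mul, Real.norm_eq_abs, Real.norm_eq_abs]
  rw [abs_of_pos (by norm_num : (0:ℝ) < 2)]
  congr 3; ring

lemma norm_unitCirc_sub_le (t u : ℝ) : ‖unitCirc t - unitCirc u‖ ≤ 2 * Real.pi * |t - u| := by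
  rw [norm_unitCirc_sub]
  have := Real.abs_sin_le_abs (x := Real.pi * (t - u))
  rw [abs_mul, abs_of_pos Real.pi_pos] at this
  linarith

lemma le_norm_unitCirc_sub {t u v : ℝ} (hv : 0 ≤ v) (h1 : v ≤ t - u) (h2 : v ≤ 1 - (t - u)) :
    4 * v ≤ ‖unitCirc t - unitCirc u‖ := by
  rw [norm_unitCirc_sub]
  have hp := Real.pi_pos
  have key : ∀ x : ℝ, 0 ≤ x → x ≤ 1 / 2 → 2 * x ≤ Real.sin (Real.pi * x) := by
    intro x hx hx'
    refine le_trans (le_of_eq ?_) (Real.mul_le_sin (by positivity) (by nlinarith))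
    field_simp
  rcases le_total (t - u) (1 / 2) with h | h
  · have := key (t - u) (by linarith) h
    have := le_abs_self (Real.sin (Real.pi * (t - u)))
    linarith
  · have := key (1 - (t - u)) (by linarith) (by linarith)
    rw [show Real.pi * (1 - (t - u)) = Real.pi - Real.pi * (t - u) by ring, Real.sin_pi_sub] at this
    have := le_abs_self (Real.sin (Real.pi * (t - u)))
    linarith

/-- The width of the configuration. -/
def cw (s a g₁ b : ℝ) : ℝ≥0∞ :=
  widthIn (closedBall 0 1) (unitCirc '' Icc s (s + a))
    (unitCirc '' Icc (s + a + g₁) (s + a + g₁ + b))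

lemma cw_swap {s a g₁ b g₂ : ℝ} (h : a + g₁ + b + g₂ = 1) :
    cw s a g₁ b = cw (s + a + g₁) b g₂ a := by
  unfold cw
  rw [widthIn_symm]
  congr 1
  have e : s + a + g₁ + b + g₂ = s + 1 := by linarith
  rw [e]
  ext z
  constructor
  · rintro ⟨t, ht, rfl⟩
    exact ⟨t + 1, ⟨by linarith [ht.1], by linarith [ht.2]⟩, by rw [unitCirc_add, unitCirc_one, mul_one]⟩
  · rintro ⟨t, ht, rfl⟩
    refine ⟨t - 1, ⟨by linarith [ht.1], by linarith [ht.2]⟩, ?_⟩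
    have := unitCirc_add (t - 1) 1
    rw [unitCirc_one, mul_one] at this
    rw [← this]; congr 1; ring

lemma cw_lower {s a g₁ b g₂ R : ℝ} (ha : 0 < a) (hb : 0 < b) (hg₁ : 0 < g₁)
    (h : a + g₁ + b + g₂ = 1) (hg : g₁ ≤ g₂) (hR : 1 ≤ R) (hRA : (R - 1) * min a b ≤ g₁) :
    ENNReal.ofReal (R / (160 * Real.log (1 + R)) * Real.log (1 + min a b / g₁)) ≤ cw s a g₁ b := by
  have hp := Real.pi_pos
  have hm : 0 < min a b := lt_min ha hb
  have hma := min_le_left a b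
  have hmb := min_le_right a b
  set m := min a b with hmdef
  have := lower_bound (X := unitCirc '' Icc s (s + a))
    (Y := unitCirc '' Icc (s + a + g₁) (s + a + g₁ + b))
    (norm_unitCirc (s + a + g₁ / 2)) (φ0 := Real.pi * g₁) (A := Real.pi * m) (R := R) (by positivity)
    (by positivity) (by nlinarith) hR (by nlinarith) ?_ ?_
  · rwa [mul_div_mul_left _ _ hp.ne'] at this
  · rintro φ ⟨h1, h2⟩
    have e1 : 2 * Real.pi * (-(φ / (2 * Real.pi))) = - φ := by field_simp
    have := unitCirc_eq (-(φ / (2 * Real.pi)))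
    rw [e1, Real.cos_neg, Real.sin_neg] at this
    rw [← this, ← unitCirc_add]
    have l1 : g₁ / 2 < φ / (2 * Real.pi) := by rw [div_lt_div_iff₀ (by norm_num) (by positivity)]; nlinarith
    have l2 : φ / (2 * Real.pi) < (g₁ + m) / 2 := by
      rw [div_lt_div_iff₀ (by positivity) (by norm_num)]; nlinarith
    exact ⟨_, ⟨by linarith, by linarith⟩, rfl⟩
  · rintro φ ⟨h1, h2⟩
    have e1 : 2 * Real.pi * (φ / (2 * Real.pi)) = φ := by field_simp
    have := unitCirc_eq (φ / (2 * Real.pi))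
    rw [e1] at this
    rw [← this, ← unitCirc_add]
    have l1 : g₁ / 2 < φ / (2 * Real.pi) := by rw [div_lt_div_iff₀ (by norm_num) (by positivity)]; nlinarith
    have l2 : φ / (2 * Real.pi) < (g₁ + m) / 2 := by
      rw [div_lt_div_iff₀ (by positivity) (by norm_num)]; nlinarith
    exact ⟨_, ⟨by linarith, by linarith⟩, rfl⟩

lemma cw_upper_near {s a g₁ b g₂ d : ℝ} (hd : 0 < d) (hd₁ : d ≤ g₁) (hd₂ : d ≤ g₂)
    (h : a + g₁ + b + g₂ = 1) (hda : d ≤ a) :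
    cw s a g₁ b ≤ ENNReal.ofReal (72 * Real.pi * Real.log (13 * a / d)) := by
  have hp := Real.pi_pos
  have hp' := Real.pi_lt_d2
  refine upper_near (p := unitCirc s) (q := unitCirc (s + a)) hd hda ?_ ?_
  · rintro _ ⟨t, ht, rfl⟩
    have h1 := norm_unitCirc_sub_le t s
    have h2 := norm_unitCirc_sub_le t (s + a)
    rw [abs_of_nonneg (by linarith [ht.1])] at h1
    rw [abs_of_nonpos (by linarith [ht.2])] at h2
    constructor <;> nlinarith [ht.1, ht.2]
  · rintro _ ⟨t, ht, rfl⟩ _ ⟨u, hu, rfl⟩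
    have h1 := norm_unitCirc_sub_le t s
    have h2 := norm_unitCirc_sub_le t (s + a)
    rw [abs_of_nonneg (by linarith [ht.1])] at h1
    rw [abs_of_nonpos (by linarith [ht.2])] at h2
    obtain ⟨t1, t2⟩ := ht
    obtain ⟨u1, u2⟩ := hu
    rcases le_total (t - s) (s + a - t) with hc | hc
    · left
      have := le_norm_unitCirc_sub (t := u) (u := t) (v := t - s + d) (by linarith) (by linarith)
        (by linarith)
      nlinarith
    · right
      have := le_norm_unitCirc_sub (t := u) (u := t) (v := s + a - t + d) (by linarith) (by linarith)
        (by linarith)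
      nlinarith

lemma cw_upper_far {s a g₁ b g₂ d : ℝ} (ha : 0 < a) (hd₁ : d ≤ g₁) (hd₂ : d ≤ g₂)
    (h : a + g₁ + b + g₂ = 1) (hda : a ≤ d) :
    cw s a g₁ b ≤ ENNReal.ofReal (2 * Real.pi / Real.log (4 * d / (Real.pi * a))) := by
  have hp := Real.pi_pos
  have hp' := Real.pi_lt_d2
  refine upper_far (p := unitCirc (s + a / 2)) (by positivity) (by nlinarith) ?_ ?_
  · rintro _ ⟨t, ht, rfl⟩
    refine (norm_unitCirc_sub_le _ _).trans ?_
    have : |t - (s + a / 2)| ≤ a / 2 := abs_le.2 ⟨by linarith [ht.1], by linarith [ht.2]⟩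
    nlinarith
  · rintro _ ⟨u, hu, rfl⟩
    exact le_norm_unitCirc_sub (by linarith) (by linarith [hu.1]) (by linarith [hu.2])

lemma lower_arith {m d : ℝ} (hm : 0 < m) (hd : 0 < d) {W : ℝ≥0∞}
    (H : ∀ R : ℝ, 1 ≤ R → (R - 1) * m ≤ d →
      ENNReal.ofReal (R / (160 * Real.log (1 + R)) * Real.log (1 + m / d)) ≤ W) :
    (d ≤ m → ENNReal.ofReal ((1000:ℝ)⁻¹ * (Real.log (m / d) + 1)) ≤ W) ∧
    (m ≤ d → ENNReal.ofReal ((1000:ℝ)⁻¹ * (Real.log (d / m) + 1)⁻¹) ≤ W) := by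
  have l2 := Real.log_two_gt_d9
  have l2' := Real.log_two_lt_d9
  constructor
  · intro hdm
    refine le_trans (ENNReal.ofReal_le_ofReal ?_) (H 1 le_rfl (by linarith))
    have hx : 1 ≤ m / d := (one_le_div hd).2 hdm
    have h1 : Real.log (m / d) ≤ Real.log (1 + m / d) := Real.log_le_log (by linarith) (by linarith)
    have h2 : Real.log 2 ≤ Real.log (1 + m / d) := Real.log_le_log (by norm_num) (by linarith)
    rw [show (1:ℝ) + 1 = 2 by norm_num]
    have h3 : (1:ℝ) / 160 ≤ 1 / (160 * Real.log 2) :=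
      one_div_le_one_div_of_le (by positivity) (by linarith)
    have h4 := mul_le_mul_of_nonneg_right h3 (show 0 ≤ Real.log (1 + m / d) by linarith)
    linarith
  · intro hmd
    have hx : 1 ≤ d / m := (one_le_div hm).2 hmd
    refine le_trans (ENNReal.ofReal_le_ofReal ?_) (H (d / m) hx ?_)
    · have hmd' : m / d = (d / m)⁻¹ := (inv_div _ _).symm
      rw [hmd']
      generalize d / m = x at *
      have hx0 : 0 < x := by linarith
      have h1 : Real.log (1 + x) ≤ Real.log x + 1 := by
        have : Real.log (1 + x) ≤ Real.log (2 * x) := Real.log_le_log (by linarith) (by linarith)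
        rw [Real.log_mul (by norm_num) hx0.ne'] at this
        linarith
      have h2 : 0 < Real.log (1 + x) := Real.log_pos (by linarith)
      have h3 : 1 / (2 * x) ≤ Real.log (1 + x⁻¹) := by
        have := Real.one_sub_inv_le_log_of_pos (show 0 < 1 + x⁻¹ by positivity)
        refine le_trans ?_ this
        rw [show 1 - (1 + x⁻¹)⁻¹ = 1 / (x + 1) by field_simp; ring]
        exact one_div_le_one_div_of_le (by linarith) (by linarith)
      calc (1000:ℝ)⁻¹ * (Real.log x + 1)⁻¹ ≤ (1000:ℝ)⁻¹ * (Real.log (1 + x))⁻¹ := by gcongr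
        _ ≤ (320:ℝ)⁻¹ * (Real.log (1 + x))⁻¹ := by gcongr; norm_num
        _ = x / (160 * Real.log (1 + x)) * (1 / (2 * x)) := by field_simp; norm_num
        _ ≤ _ := by gcongr
    · have : d / m * m = d := by field_simp
      nlinarith

lemma upper_arith {m d : ℝ} (hm : 0 < m) (hd : 0 < d) {W : ℝ≥0∞}
    (H1 : d ≤ m → W ≤ ENNReal.ofReal (72 * Real.pi * Real.log (13 * m / d)))
    (H2 : m ≤ d → W ≤ ENNReal.ofReal (2 * Real.pi / Real.log (4 * d / (Real.pi * m)))) :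
    (d ≤ m → W ≤ ENNReal.ofReal (1000 * (Real.log (m / d) + 1))) ∧
    (m ≤ d → W ≤ ENNReal.ofReal (1000 * (Real.log (d / m) + 1)⁻¹)) := by
  have hp := Real.pi_pos
  have hp' := Real.pi_lt_d2
  constructor
  · intro hdm
    refine (H1 hdm).trans (ENNReal.ofReal_le_ofReal ?_)
    have hx : 1 ≤ m / d := (one_le_div hd).2 hdm
    have hl := Real.log_nonneg hx
    rw [mul_div_assoc, Real.log_mul (by norm_num) (by linarith)]
    have h13 : Real.log 13 ≤ 4 * Real.log 2 := by
      rw [← Real.log_rpow (by norm_num)]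
      exact Real.log_le_log (by norm_num) (by norm_num)
    have l2' := Real.log_two_lt_d9
    have h14 : 0 ≤ Real.log 13 := Real.log_nonneg (by norm_num)
    nlinarith
  · intro hmd
    refine (H2 hmd).trans (ENNReal.ofReal_le_ofReal ?_)
    have hx : 1 ≤ d / m := (one_le_div hm).2 hmd
    have hl := Real.log_nonneg hx
    rw [show 4 * d / (Real.pi * m) = (4 / Real.pi) * (d / m) by field_simp,
      Real.log_mul (by positivity) (by positivity)]
    have h4 : 1 / 5 ≤ Real.log (4 / Real.pi) := by
      have := Real.one_sub_inv_le_log_of_pos (show 0 < 4 / Real.pi by positivity)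
      rw [inv_div] at this
      linarith
    rw [← div_eq_mul_inv, div_le_div_iff₀ (by linarith) (by linarith)]
    nlinarith

/-- **Log-Rule for the disk.** For disjoint closed arcs `I`, `J` of the unit circle of
positive lengths `a`, `b` and complementary gaps `g₁, g₂ > 0`, the inner width over the
closed unit disk satisfies the logarithmic bounds with an absolute constant. -/
theorem log_rule :
    ∃ C : ℝ, 1 ≤ C ∧
      ∀ s a g₁ b g₂ : ℝ, 0 < a → 0 < b → 0 < g₁ → 0 < g₂ →
        a + g₁ + b + g₂ = 1 →
        logBounds C (min a b) (min g₁ g₂)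
          (widthIn (closedBall 0 1) (unitCirc '' Icc s (s + a))
            (unitCirc '' Icc (s + a + g₁) (s + a + g₁ + b))) := by
  refine ⟨1000, by norm_num, ?_⟩
  intro s a g₁ b g₂ ha hb hg₁ hg₂ hsum
  change logBounds 1000 (min a b) (min g₁ g₂) (cw s a g₁ b)
  have hm : 0 < min a b := lt_min ha hb
  have hd : 0 < min g₁ g₂ := lt_min hg₁ hg₂
  have hlow := lower_arith (W := cw s a g₁ b) hm hd ?_
  · have hup := upper_arith (W := cw s a g₁ b) hm hd ?_ ?_
    · exact ⟨fun h => ⟨hlow.1 h, hup.1 h⟩, fun h => ⟨hlow.2 h, hup.2 h⟩⟩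
    · intro h
      rcases le_total a b with hab | hab
      · rw [min_eq_left hab] at h ⊢
        exact cw_upper_near hd (min_le_left _ _) (min_le_right _ _) hsum h
      · rw [min_eq_right hab] at h ⊢
        rw [cw_swap hsum]
        exact cw_upper_near (g₂ := g₁) hd (min_le_right _ _) (min_le_left _ _) (by linarith) h
    · intro h
      rcases le_total a b with hab | hab
      · rw [min_eq_left hab] at h ⊢
        exact cw_upper_far ha (min_le_left _ _) (min_le_right _ _) hsum h
      · rw [min_eq_right hab] at h ⊢
        rw [cw_swap hsum]
        exact cw_upper_far (g₂ := g₁) hb (min_le_right _ _) (min_le_left _ _) (by linarith) h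
  · intro R hR hRA
    rcases le_total g₁ g₂ with hg | hg
    · rw [min_eq_left hg] at hRA ⊢
      exact cw_lower ha hb hg₁ hsum hg hR hRA
    · rw [min_eq_right hg, min_comm] at hRA
      rw [min_eq_right hg, min_comm, cw_swap hsum]
      exact cw_lower (g₂ := g₁) hb ha hg₂ (by linarith) hg hR hRA
end
end

section
/- Buffer Lemma (topological). Let x > 0 and let ψ : [0, x] × [0, 1] → ℂ be continuous and injective; write R := ψ([0,x]×[0,1]), call γ_t := ψ({t}×[0,1]) the vertical curves of R, and ∂ʰR := ψ([0,x]×{0,1}) the horizontal boundary of R. Let D ⊆ ℂ be a closed Jordan disk with R ⊆ D and with ∂ʰR contained in the frontier ∂D of D, and let O ⊆ ℂ be a connected set with O ∩ ∂ʰR = ∅ and O ∩ (∂D ∖ ∂ʰR) ≠ ∅. Set T := {t ∈ [0, x] : γ_t ∩ O ≠ ∅}. Then: (i) the complement [0, x] ∖ T is order-convex (if t₁ < t < t₂ and t₁, t₂ ∉ T then t ∉ T), and if T is nonempty then 0 ∈ T or x ∈ T — so the vertical curves of R meeting O form one or two buffers adjacent to the vertical sides of R; (ii) if in addition O intersects only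 one of the two connected components of ∂D ∖ ∂ʰR, then T is itself order-convex, i.e. the vertical curves meeting O form a single buffer. -/
noncomputable section

open Set Metric

/-- Continuous logarithm on a real normed space. -/
theorem bl_lift {E : Type*} [NormedAddCommGroup E] [NormedSpace ℝ E] (g : E → ℂ)
    (hg : Continuous g) (h0 : ∀ z, g z ≠ 0) :
    ∃ L : E → ℂ, Continuous L ∧ ∀ z, Complex.exp (L z) = g z := by
  obtain ⟨F, ⟨-, hF⟩, -⟩ := Complex.isCoveringMapOn_exp.existsUnique_continuousMap_lifts
    (⟨g, hg⟩ : C(E, ℂ)) (a₀ := 0) (e₀ := Complex.log (g 0)) (Complex.exp_log (h0 0))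
    (fun z => h0 z)
  exact ⟨F, F.continuous, fun z => congrFun hF z⟩

theorem bl_const {A : Type*} [TopologicalSpace A] {S : Set A} (hS : IsPreconnected S)
    {F : A → ℂ} (hF : ContinuousOn F S) (c : ℂ) (hc : ∀ z ∈ S, Complex.exp (F z) = c)
    {a b : A} (ha : a ∈ S) (hb : b ∈ S) : F a = F b :=
  Complex.isCoveringMap_exp.constOn_of_comp hS hF
    (fun a ha a' ha' => Subtype.ext ((hc a ha).trans (hc a' ha').symm)) ha hb

theorem bl_const_univ {A : Type*} [TopologicalSpace A] [PreconnectedSpace A]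
    {F : A → ℂ} (hF : Continuous F) (c : ℂ) (hc : ∀ z, Complex.exp (F z) = c)
    (a b : A) : F a = F b :=
  bl_const isPreconnected_univ hF.continuousOn c (fun z _ => hc z) (mem_univ a) (mem_univ b)

/-- Radial retraction onto the closed unit disk. -/
def blRet (z : ℂ) : ℂ := ((max 1 ‖z‖ : ℝ) : ℂ)⁻¹ * z

theorem blRet_cont : Continuous blRet := by
  unfold blRet
  refine Continuous.mul (Continuous.inv₀ (by fun_prop) ?_) continuous_id
  intro z
  have : (0:ℝ) < max 1 ‖z‖ := lt_max_of_lt_left one_pos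
  exact_mod_cast this.ne'

theorem blRet_mem (z : ℂ) : blRet z ∈ closedBall (0:ℂ) 1 := by
  have h : (0:ℝ) < max 1 ‖z‖ := lt_max_of_lt_left one_pos
  rw [mem_closedBall_zero_iff, blRet, norm_mul, norm_inv, Complex.norm_real, Real.norm_of_nonneg h.le,
    inv_mul_le_iff₀ h]
  simp

theorem blRet_eq {z : ℂ} (hz : z ∈ closedBall (0:ℂ) 1) : blRet z = z := by
  rw [mem_closedBall_zero_iff] at hz
  simp [blRet, max_eq_left hz]

/-- Planar invariance of domain at the centre of the unit disk. -/
theorem bl_invdom0 (g : ℂ → ℂ) (hg : Continuous g) (hi : InjOn g (closedBall 0 1)) :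
    g 0 ∈ interior (g '' closedBall 0 1) := by
  by_contra hcon
  have h0m : (0:ℂ) ∈ closedBall (0:ℂ) 1 := by simp
  have hsm : ∀ z : ℂ, ‖z‖ = 1 → z ∈ closedBall (0:ℂ) 1 := fun z hz => by simp [hz]
  obtain ⟨δ, hδ, hδ2⟩ : ∃ δ > 0, ∀ z : ℂ, ‖z‖ = 1 → δ ≤ ‖g z - g 0‖ := by
    obtain ⟨w, hw, hw2⟩ := (isCompact_sphere (0:ℂ) 1).exists_isMinOn
      (NormedSpace.sphere_nonempty.2 zero_le_one)
      (f := fun z => ‖g z - g 0‖) (by fun_prop)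
    refine ⟨‖g w - g 0‖, ?_, fun z hz => hw2 (by simpa using hz)⟩
    rw [gt_iff_lt, norm_pos_iff, sub_ne_zero]
    intro h
    have hw' : ‖w‖ = 1 := by simpa using hw
    have := hi (hsm w hw') h0m h
    simp [this] at hw'
  obtain ⟨q, hq, hq2⟩ : ∃ q, ‖q - g 0‖ < δ / 2 ∧ q ∉ g '' closedBall 0 1 := by
    by_contra! h
    apply hcon
    rw [mem_interior_iff_mem_nhds, Metric.mem_nhds_iff]
    exact ⟨δ / 2, by positivity, fun z hz => h z (by simpa [dist_eq_norm] using hz)⟩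
  obtain ⟨K, hK, hK2⟩ := bl_lift (fun z => g (blRet z) - q)
    ((hg.comp blRet_cont).sub continuous_const)
    (fun z h => hq2 ⟨blRet z, blRet_mem z, sub_eq_zero.1 h⟩)
  let e : ℝ → ℂ := fun θ => Complex.exp (θ * Complex.I)
  have he : Continuous e := by fun_prop
  have hen : ∀ θ, ‖e θ‖ = 1 := fun θ => Complex.norm_exp_ofReal_mul_I θ
  have hepi : ∀ θ, e (θ + Real.pi) = - e θ := by
    intro θ
    simp [e, add_mul, Complex.exp_add]
  have he2pi : ∀ θ, e (θ + 2 * Real.pi) = e θ := by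
    intro θ
    rw [two_mul, ← add_assoc, hepi, hepi, neg_neg]
  let σ : ℝ → ℝ := fun s => max 0 (min 1 s)
  have hσ : Continuous σ := by fun_prop
  have hσ0 : ∀ s, 0 ≤ σ s := fun s => le_max_left _ _
  have hσ1 : ∀ s, σ s ≤ 1 := fun s => max_le zero_le_one (min_le_left _ _)
  obtain ⟨L, hL, hL2⟩ := bl_lift (E := ℝ × ℝ)
    (fun p => g (e p.1) - g (-(σ p.2 : ℂ) * e p.1)) (by fun_prop) (by
      intro p h
      have h1 := hi (hsm _ (hen p.1)) (by
        rw [mem_closedBall_zero_iff, norm_mul, hen, norm_neg, Complex.norm_real,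
          Real.norm_of_nonneg (hσ0 _), mul_one]; exact hσ1 _) (sub_eq_zero.1 h)
      have hne : e p.1 ≠ 0 := Complex.exp_ne_zero _
      have h2 : (1 + (σ p.2 : ℂ)) * e p.1 = 0 := by linear_combination h1
      rcases mul_eq_zero.1 h2 with h3 | h3
      · have : (1 + σ p.2 : ℝ) = 0 := by exact_mod_cast h3
        linarith [hσ0 p.2]
      · exact hne h3)
  have hnq : ∀ θ, δ / 2 < ‖g (e θ) - q‖ := by
    intro θ
    have h1 := hδ2 _ (hen θ)
    have h2 : ‖g (e θ) - g 0‖ ≤ ‖g (e θ) - q‖ + ‖q - g 0‖ := by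
      simpa using norm_add_le (g (e θ) - q) (q - g 0)
    linarith
  have hnq0 : ∀ θ, g (e θ) - q ≠ 0 := fun θ => norm_pos_iff.1 (by linarith [hnq θ])
  have hslit : ∀ θ, (g (e θ) - g 0) / (g (e θ) - q) ∈ Complex.slitPlane := by
    intro θ
    have : (g (e θ) - g 0) / (g (e θ) - q) = 1 + (q - g 0) / (g (e θ) - q) := by
      have := hnq0 θ
      field_simp
      ring
    rw [this]
    apply Complex.mem_slitPlane_of_norm_lt_one
    rw [norm_div, div_lt_one (by linarith [hnq θ])]
    linarith [hnq θ]
  let P : ℝ → ℂ := fun θ => K (e θ) + Complex.log ((g (e θ) - g 0) / (g (e θ) - q))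
  have hP : Continuous P := by
    refine (hK.comp he).add (Continuous.clog ?_ hslit)
    exact Continuous.div₀ (by fun_prop) (by fun_prop) hnq0
  have hPe : ∀ θ, Complex.exp (P θ) = g (e θ) - g 0 := by
    intro θ
    have := hnq0 θ
    simp only [P]
    rw [Complex.exp_add, hK2, Complex.exp_log (Complex.slitPlane_ne_zero (hslit θ)),
      blRet_eq (hsm _ (hen θ))]
    field_simp
  have hPper : P (0 + 2 * Real.pi) = P 0 := by simp only [P, he2pi]
  have c1 := bl_const_univ (F := fun θ : ℝ => L (θ, 0) - P θ) (by fun_prop) 1 (by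
    intro θ
    rw [Complex.exp_sub, hL2, hPe]
    have : g (e θ) - g 0 ≠ 0 := by rw [← hPe]; exact Complex.exp_ne_zero _
    simp [σ, this]) (0 + 2 * Real.pi) 0
  have c2 := bl_const_univ (F := fun p : ℝ × ℝ => L (p.1 + 2 * Real.pi, p.2) - L p)
    (by fun_prop) 1 (by
    rintro ⟨θ, s⟩
    rw [Complex.exp_sub]
    have : Complex.exp (L (θ + 2 * Real.pi, s)) = Complex.exp (L (θ, s)) := by
      rw [hL2, hL2]; simp only [he2pi]
    rw [this, div_self (Complex.exp_ne_zero _)]) (0, 0) (0, 1)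
  have hE : ∀ θ : ℝ, Complex.exp (L (θ + Real.pi, 1) - L (θ, 1)) = -1 := by
    intro θ
    rw [Complex.exp_sub, div_eq_iff (Complex.exp_ne_zero _), hL2, hL2]
    simp [hepi, σ]
  have c3 := bl_const_univ (F := fun θ : ℝ => L (θ + Real.pi, 1) - L (θ, 1)) (by fun_prop) (-1)
    hE (0 + Real.pi) 0
  simp only at c1 c2 c3
  have h4 : L (0 + Real.pi + Real.pi, 1) = L (0 + 2 * Real.pi, 1) := by
    rw [add_assoc, ← two_mul]
  have h5 : L (0 + Real.pi, 1) - L (0, 1) = 0 := by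
    linear_combination (1/2 : ℂ) * (c1 + hPper - c2 - c3 + h4)
  have h6 := hE 0
  rw [h5] at h6
  norm_num at h6

theorem bl_invdom1 (f : ℂ → ℂ) (c : ℂ) (r : ℝ) (hr : 0 < r)
    (hf : ContinuousOn f (closedBall c r)) (hi : InjOn f (closedBall c r)) :
    f c ∈ interior (f '' closedBall c r) := by
  let m : ℂ → ℂ := fun z => c + r * blRet z
  have hm : ∀ z, m z ∈ closedBall c r := by
    intro z
    have := blRet_mem z
    rw [mem_closedBall_zero_iff] at this
    simp only [m, mem_closedBall, dist_eq_norm, add_sub_cancel_left, norm_mul, Complex.norm_real,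
      Real.norm_of_nonneg hr.le]
    nlinarith
  have hmc : Continuous m := by
    have := blRet_cont
    fun_prop
  have key := bl_invdom0 (fun z => f (m z)) (hf.comp_continuous hmc hm) (by
    intro z hz w hw h
    have := hi (hm z) (hm w) h
    simp only [m, add_right_inj, blRet_eq hz, blRet_eq hw] at this
    exact mul_left_cancel₀ (by exact_mod_cast hr.ne') this)
  have h0 : m 0 = c := by simp [m, blRet]
  simp only [h0] at key
  refine interior_mono ?_ key
  rintro _ ⟨z, -, rfl⟩
  exact ⟨m z, hm z, rfl⟩

/-- Planar invariance of domain. -/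
theorem bl_invdom (f : ℂ → ℂ) (U : Set ℂ) (hU : IsOpen U)
    (hf : ContinuousOn f U) (hi : InjOn f U) : IsOpen (f '' U) := by
  rw [isOpen_iff_mem_nhds]
  rintro _ ⟨c, hc, rfl⟩
  obtain ⟨r, hr, hrU⟩ := Metric.nhds_basis_closedBall.mem_iff.1 (hU.mem_nhds hc)
  have := bl_invdom1 f c r hr (hf.mono hrU) (hi.mono hrU)
  exact Filter.mem_of_superset (mem_interior_iff_mem_nhds.1 this) (image_mono hrU)

theorem bl_invdom_prod (f : ℝ × ℝ → ℂ) (U : Set (ℝ × ℝ)) (hU : IsOpen U)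
    (hf : ContinuousOn f U) (hi : InjOn f U) : IsOpen (f '' U) := by
  let e := Complex.equivRealProdCLM.toHomeomorph
  have := bl_invdom (f ∘ e) (e ⁻¹' U) (hU.preimage e.continuous)
    (hf.comp e.continuous.continuousOn (mapsTo_preimage _ _))
    (hi.comp e.injective.injOn (mapsTo_preimage _ _))
  rwa [image_comp, image_preimage_eq _ e.surjective] at this

theorem bl_inc {L L' : ℝ → ℂ} (hL : Continuous L) (hL' : Continuous L')
    (h : ∀ s, Complex.exp (L s) = Complex.exp (L' s)) : L 1 - L 0 = L' 1 - L' 0 := by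
  have := bl_const_univ (F := fun s => L s - L' s) (by fun_prop) 1 (by
    intro s
    rw [Complex.exp_sub, h, div_self (Complex.exp_ne_zero _)]) 1 0
  linear_combination this

/-- The continuous increment of `log (Γ s - z)` along a path. -/
theorem bl_delta (Γ : ℝ → ℂ) (hΓ : Continuous Γ) (hK : IsCompact (range Γ)) :
    ∃ Δ : ℂ → ℂ, ContinuousOn Δ (range Γ)ᶜ ∧ ∀ z ∉ range Γ,
      Complex.exp (Δ z) = (Γ 1 - z) / (Γ 0 - z) ∧
      ∀ L : ℝ → ℂ, Continuous L → (∀ s, Complex.exp (L s) = Γ s - z) → Δ z = L 1 - L 0 := by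
  have h1 : ∀ z, ∃ L : ℝ → ℂ, z ∉ range Γ →
      Continuous L ∧ ∀ s, Complex.exp (L s) = Γ s - z := by
    intro z
    by_cases hz : z ∈ range Γ
    · exact ⟨0, fun h => absurd hz h⟩
    · obtain ⟨L, hL⟩ := bl_lift (fun s => Γ s - z) (by fun_prop)
        (fun s h => hz ⟨s, sub_eq_zero.1 h⟩)
      exact ⟨L, fun _ => hL⟩
  choose L hL using h1
  have hu : ∀ z ∉ range Γ, ∀ L' : ℝ → ℂ, Continuous L' →
      (∀ s, Complex.exp (L' s) = Γ s - z) → L z 1 - L z 0 = L' 1 - L' 0 := by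
    intro z hz L' hL' h
    exact bl_inc (hL z hz).1 hL' (fun s => ((hL z hz).2 s).trans (h s).symm)
  refine ⟨fun z => L z 1 - L z 0, ?_, fun z hz => ⟨?_, hu z hz⟩⟩
  · intro z₀ hz₀
    apply ContinuousAt.continuousWithinAt
    obtain ⟨ε, hε, hε2⟩ := Metric.mem_nhds_iff.1 (hK.isClosed.isOpen_compl.mem_nhds hz₀)
    have hne : ∀ z ∉ range Γ, ∀ s, Γ s - z ≠ 0 := fun z hz s h => hz ⟨s, sub_eq_zero.1 h⟩
    have hd : ∀ s, ε ≤ ‖Γ s - z₀‖ := by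
      intro s
      by_contra! h
      exact hε2 (by simpa [dist_eq_norm] using h : Γ s ∈ ball z₀ ε) ⟨s, rfl⟩
    have hslit : ∀ z ∈ ball z₀ ε, ∀ s, (Γ s - z) / (Γ s - z₀) ∈ Complex.slitPlane := by
      intro z hz s
      have : (Γ s - z) / (Γ s - z₀) = 1 + (z₀ - z) / (Γ s - z₀) := by
        have := hne z₀ hz₀ s
        field_simp
        ring
      rw [this]
      apply Complex.mem_slitPlane_of_norm_lt_one
      rw [norm_div, div_lt_one (by linarith [hd s])]
      have : ‖z₀ - z‖ < ε := by rw [norm_sub_rev, ← dist_eq_norm]; exact hz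
      linarith [hd s]
    have hev : ∀ᶠ z in nhds z₀, L z₀ 1 - L z₀ 0 + (Complex.log ((Γ 1 - z) / (Γ 1 - z₀))
        - Complex.log ((Γ 0 - z) / (Γ 0 - z₀))) = L z 1 - L z 0 := by
      filter_upwards [ball_mem_nhds z₀ hε] with z hz
      rw [hu z (hε2 hz) (fun s => L z₀ s + Complex.log ((Γ s - z) / (Γ s - z₀))) ?_ ?_]
      · ring
      · refine (hL z₀ hz₀).1.add (Continuous.clog ?_ (hslit z hz))
        exact Continuous.div₀ (by fun_prop) (by fun_prop) (hne z₀ hz₀)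
      · intro s
        have := hne z₀ hz₀ s
        rw [Complex.exp_add, (hL z₀ hz₀).2, Complex.exp_log (Complex.slitPlane_ne_zero (hslit z hz s))]
        field_simp
    refine ContinuousAt.congr ?_ hev
    have hz0 := mem_ball_self hε (x := z₀)
    refine continuousAt_const.add (ContinuousAt.sub ?_ ?_)
    · exact ContinuousAt.clog (by fun_prop) (hslit z₀ hz0 1)
    · exact ContinuousAt.clog (by fun_prop) (hslit z₀ hz0 0)
  · rw [Complex.exp_sub, (hL z hz).2, (hL z hz).2]

theorem bl_half {w : ℂ} (hw : ‖w‖ ≤ 1) (h1 : w ≠ 1) : 0 < (1 - w).re := by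
  have h2 := Complex.sq_norm w
  rw [Complex.normSq_apply] at h2
  have h3 : ‖w‖ ^ 2 ≤ 1 := by nlinarith [norm_nonneg w]
  rw [Complex.sub_re, Complex.one_re]
  by_contra! h
  have h4 : w.im = 0 := by nlinarith [sq_nonneg w.im]
  have h5 : w.re = 1 := by nlinarith
  exact h1 (Complex.ext (by simpa using h5) (by simpa using h4))

/-- A path in the closed unit disk between distinct boundary points separates the
complementary arcs. -/
theorem bl_sep (Γ : ℝ → ℂ) (hΓ : Continuous Γ) (hK : IsCompact (range Γ))
    (hΓ1 : ∀ s, ‖Γ s‖ ≤ 1) (ha : ‖Γ 0‖ = 1) (hb : ‖Γ 1‖ = 1) (hab : Γ 0 ≠ Γ 1) :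
    ∃ (M : ℂ → ℂ) (d : ℂ), d ≠ 0 ∧ ContinuousOn M (closedBall 0 1 \ range Γ) ∧
      (∀ z ∈ closedBall 0 1 \ range Γ, Complex.exp (M z) = 1) ∧
      (∀ z : ℂ, ‖z‖ = 1 → (d * (Γ 0 - z) / (Γ 1 - z)).im = 0) ∧
      ∀ z₁ z₂ : ℂ, ‖z₁‖ = 1 → ‖z₂‖ = 1 → z₁ ∉ range Γ → z₂ ∉ range Γ →
        0 < (d * (Γ 0 - z₁) / (Γ 1 - z₁)).re → (d * (Γ 0 - z₂) / (Γ 1 - z₂)).re < 0 →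
        M z₁ ≠ M z₂ := by
  obtain ⟨Δ, hΔc, hΔ⟩ := bl_delta Γ hΓ hK
  have hm0 : Γ 0 ∈ range Γ := ⟨0, rfl⟩
  have hm1 : Γ 1 ∈ range Γ := ⟨1, rfl⟩
  generalize haa : Γ 0 = a at *
  generalize hbb : Γ 1 = b at *
  have ha0 : a ≠ 0 := norm_pos_iff.1 (by rw [ha]; exact one_pos)
  have hb0 : b ≠ 0 := norm_pos_iff.1 (by rw [hb]; exact one_pos)
  obtain ⟨d, hd, hd1, hdi⟩ : ∃ d : ℂ, d ^ 2 * a = b ∧ ‖d‖ = 1 ∧ 0 < d.im := by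
    obtain ⟨d, hd⟩ := IsAlgClosed.exists_pow_nat_eq (b / a) (n := 2) two_pos
    have hd' : d ^ 2 * a = b := by rw [hd]; field_simp
    have hn : ‖d‖ = 1 := by
      have : ‖d‖ ^ 2 = 1 := by rw [← norm_pow, hd, norm_div, ha, hb, div_one]
      nlinarith [norm_nonneg d]
    rcases lt_trichotomy d.im 0 with h | h | h
    · exact ⟨-d, by rw [neg_sq, hd'], by rw [norm_neg, hn], by simpa using h⟩
    · exfalso
      have h2 := Complex.sq_norm d
      rw [Complex.normSq_apply, hn, h] at h2
      have : d ^ 2 = 1 := by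
        apply Complex.ext
        · simp [sq, h]; linarith
        · simp [sq, h]
      rw [this, one_mul] at hd'
      exact hab hd'
    · exact ⟨d, hd', hn, h⟩
  have hd0 : d ≠ 0 := norm_pos_iff.1 (by rw [hd1]; exact one_pos)
  have hII := Complex.I_ne_zero
  -- key identity
  have hconj : ∀ z : ℂ, ((b - z) * (starRingEnd ℂ) (d * (a - z))).im = d.im * (1 - ‖z‖ ^ 2) := by
    intro z
    have e1 : a * (starRingEnd ℂ) a = 1 := by
      rw [Complex.mul_conj, Complex.normSq_eq_norm_sq, ha]; norm_num
    have e2 : d * (starRingEnd ℂ) d = 1 := by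
      rw [Complex.mul_conj, Complex.normSq_eq_norm_sq, hd1]; norm_num
    have e3 : z * (starRingEnd ℂ) z = ((‖z‖ ^ 2 : ℝ) : ℂ) := by
      rw [Complex.mul_conj, Complex.normSq_eq_norm_sq]
    have e4 : (b - z) * (starRingEnd ℂ) (d * (a - z)) =
        d - (d * a * (starRingEnd ℂ) z + (starRingEnd ℂ) (d * a * (starRingEnd ℂ) z))
          + (starRingEnd ℂ) d * ((‖z‖ ^ 2 : ℝ) : ℂ) := by
      rw [← e3, ← hd]
      simp only [map_mul, map_sub, Complex.conj_conj]
      linear_combination (d * (d * (starRingEnd ℂ) d)) * e1 +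
        (d - d * a * (starRingEnd ℂ) z) * e2
    rw [e4, Complex.add_conj]
    simp only [Complex.add_im, Complex.sub_im, Complex.ofReal_im, Complex.mul_im, Complex.conj_im,
      Complex.conj_re, Complex.ofReal_re]
    ring
  let u : ℂ → ℂ := fun z => (b - z) / (d * (a - z))
  have hu_im : ∀ z : ℂ, (u z).im = d.im * (1 - ‖z‖ ^ 2) / Complex.normSq (d * (a - z)) := by
    intro z
    rw [← hconj]
    simp only [u]
    rw [div_eq_mul_inv, Complex.inv_def, ← mul_assoc, Complex.im_mul_ofReal, div_eq_mul_inv]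
  have hu_inv : ∀ z, d * (a - z) / (b - z) = (u z)⁻¹ := by
    intro z; simp only [u]; rw [inv_div]
  have hu0 : ∀ z ∉ range Γ, u z ≠ 0 := by
    intro z hz
    have h1 : b - z ≠ 0 := fun h => hz (by rw [← sub_eq_zero.1 h]; exact hm1)
    have h2 : a - z ≠ 0 := fun h => hz (by rw [← sub_eq_zero.1 h]; exact hm0)
    exact div_ne_zero h1 (mul_ne_zero hd0 h2)
  have hu_nonneg : ∀ z ∈ closedBall (0:ℂ) 1, 0 ≤ (u z).im := by
    intro z hz
    rw [mem_closedBall_zero_iff] at hz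
    rw [hu_im]
    have : 0 ≤ 1 - ‖z‖ ^ 2 := by nlinarith [norm_nonneg z]
    have := Complex.normSq_nonneg (d * (a - z))
    positivity
  have hslit : ∀ z ∈ closedBall (0:ℂ) 1 \ range Γ, u z / Complex.I ∈ Complex.slitPlane := by
    rintro z ⟨hz, hz2⟩
    rw [Complex.mem_slitPlane_iff, Complex.div_I]
    simp only [Complex.neg_re, Complex.mul_re, Complex.neg_im, Complex.mul_im,
      Complex.I_re, Complex.I_im]
    have h1 := hu_nonneg z hz
    rcases h1.lt_or_eq with h | h
    · left; linarith
    · right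
      intro h3
      exact hu0 z hz2 (Complex.ext (by simpa using h3) (by simpa using h.symm))
  have hcu : ContinuousOn u (closedBall (0:ℂ) 1 \ range Γ) := by
    refine ContinuousOn.div (by fun_prop) (by fun_prop) ?_
    rintro z ⟨-, hz⟩
    exact mul_ne_zero hd0 (fun h => hz (by rw [← sub_eq_zero.1 h]; exact hm0))
  refine ⟨fun z => Δ z - Complex.log (u z / Complex.I) - Complex.log (d * Complex.I), d, hd0,
    ?_, ?_, ?_, ?_⟩
  · refine ((hΔc.mono (fun z hz => hz.2)).sub (ContinuousOn.clog ?_ hslit)).sub continuousOn_const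
    exact hcu.div_const _
  · rintro z hz
    have h1 : b - z ≠ 0 := fun h => hz.2 (by rw [← sub_eq_zero.1 h]; exact hm1)
    have h2 : a - z ≠ 0 := fun h => hz.2 (by rw [← sub_eq_zero.1 h]; exact hm0)
    rw [Complex.exp_sub, Complex.exp_sub, (hΔ z hz.2).1,
      Complex.exp_log (Complex.slitPlane_ne_zero (hslit z hz)),
      Complex.exp_log (mul_ne_zero hd0 hII)]
    simp only [u]
    field_simp
  · intro z hz
    rw [hu_inv, Complex.inv_im, hu_im, hz]
    simp
  · -- jump
    have key : ∀ z : ℂ, ‖z‖ = 1 → z ∉ range Γ →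
        -Real.pi < (Δ z).im ∧ (Δ z).im < Real.pi ∧ (u z).im = 0 := by
      intro z hz hzΓ
      have hz0 : z ≠ 0 := norm_pos_iff.1 (by rw [hz]; exact one_pos)
      have hre : ∀ s, 0 < (1 - Γ s / z).re := by
        intro s
        apply bl_half
        · rw [norm_div, hz, div_one]; exact hΓ1 s
        · intro h
          rw [div_eq_one_iff_eq hz0] at h
          exact hzΓ ⟨s, h⟩
      have hsl : ∀ s, 1 - Γ s / z ∈ Complex.slitPlane := fun s => Or.inl (hre s)
      have h1 := (hΔ z hzΓ).2 (fun s => Complex.log (-z) + Complex.log (1 - Γ s / z))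
        (continuous_const.add (Continuous.clog (by fun_prop) hsl)) (by
          intro s
          rw [Complex.exp_add, Complex.exp_log (neg_ne_zero.2 hz0),
            Complex.exp_log (Complex.slitPlane_ne_zero (hsl s))]
          field_simp
          ring)
      have h2 : ∀ s, |(Complex.log (1 - Γ s / z)).im| < Real.pi / 2 := by
        intro s
        rw [Complex.log_im]
        exact Complex.abs_arg_lt_pi_div_two_iff.2 (Or.inl (hre s))
      have h3 : (Δ z).im = (Complex.log (1 - Γ 1 / z)).im - (Complex.log (1 - Γ 0 / z)).im := by
        rw [h1]; simp
      have h4 := abs_lt.1 (h2 0)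
      have h5 := abs_lt.1 (h2 1)
      refine ⟨by linarith, by linarith, ?_⟩
      rw [hu_im, hz]; simp
    have hre_inv : ∀ z, (d * (a - z) / (b - z)).re = (u z).re / Complex.normSq (u z) := by
      intro z
      rw [hu_inv, Complex.inv_re]
    have hsin : ∀ z, ‖z‖ = 1 → z ∉ range Γ →
        Real.exp (Δ z).re * Real.sin (Δ z).im = (u z).re * d.im := by
      intro z hz hzΓ
      rw [← Complex.exp_im, (hΔ z hzΓ).1]
      have h1 : b - z ≠ 0 := fun h => hzΓ (by rw [← sub_eq_zero.1 h]; exact hm1)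
      have h2 : a - z ≠ 0 := fun h => hzΓ (by rw [← sub_eq_zero.1 h]; exact hm0)
      have : (b - z) / (a - z) = u z * d := by simp only [u]; field_simp
      rw [this, Complex.mul_im, (key z hz hzΓ).2.2]
      ring
    intro z₁ z₂ h1 h2 hz1 hz2 hp hn hM
    rw [hre_inv] at hp hn
    have hp' : 0 < (u z₁).re := by
      by_contra! h
      exact absurd (div_nonpos_of_nonpos_of_nonneg h (Complex.normSq_nonneg _)) (not_le.2 hp)
    have hn' : (u z₂).re < 0 := by
      by_contra! h
      exact absurd (div_nonneg h (Complex.normSq_nonneg _)) (not_le.2 hn)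
    obtain ⟨k1, k2, k3⟩ := key z₁ h1 hz1
    obtain ⟨l1, l2, l3⟩ := key z₂ h2 hz2
    have s1 : 0 < (Δ z₁).im := by
      by_contra! h
      have := hsin z₁ h1 hz1
      have h7 := Real.sin_nonpos_of_nonpos_of_neg_pi_le h k1.le
      nlinarith [Real.exp_pos (Δ z₁).re, mul_pos hp' hdi]
    have s2 : (Δ z₂).im < 0 := by
      by_contra! h
      have := hsin z₂ h2 hz2
      have h7 := Real.sin_nonneg_of_nonneg_of_le_pi h l2.le
      nlinarith [Real.exp_pos (Δ z₂).re, mul_pos (neg_pos.2 hn') hdi]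
    have g1 : (Complex.log (u z₁ / Complex.I)).im = -(Real.pi / 2) := by
      rw [Complex.log_im, Complex.arg_eq_neg_pi_div_two_iff, Complex.div_I]
      simp [k3, hp']
    have g2 : (Complex.log (u z₂ / Complex.I)).im = Real.pi / 2 := by
      rw [Complex.log_im, Complex.arg_eq_pi_div_two_iff, Complex.div_I]
      simp [l3, hn']
    have hM' := congrArg Complex.im hM
    simp only [Complex.sub_im, g1, g2] at hM'
    linarith

theorem bl_inverse (φ : ℂ → ℂ) (hφc : ContinuousOn φ (closedBall 0 1))
    (hφi : InjOn φ (closedBall 0 1)) :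
    ∃ χ : ℂ → ℂ, ContinuousOn χ (φ '' closedBall 0 1) ∧
      (∀ z ∈ φ '' closedBall 0 1, χ z ∈ closedBall (0:ℂ) 1 ∧ φ (χ z) = z) ∧
      (∀ z ∈ frontier (φ '' closedBall 0 1), ‖χ z‖ = 1) := by
  have hcB : IsCompact (closedBall (0:ℂ) 1) := isCompact_closedBall _ _
  have hD := (hcB.image_of_continuousOn hφc)
  have hχ : ∀ z ∈ φ '' closedBall 0 1, Function.invFunOn φ (closedBall 0 1) z ∈ closedBall (0:ℂ) 1
      ∧ φ (Function.invFunOn φ (closedBall 0 1) z) = z :=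
    fun z hz => ⟨Function.invFunOn_mem hz, Function.invFunOn_eq hz⟩
  refine ⟨Function.invFunOn φ (closedBall 0 1), ?_, hχ, ?_⟩
  · rw [continuousOn_iff_isClosed]
    intro t ht
    refine ⟨φ '' (closedBall 0 1 ∩ t), ((hcB.inter_right ht).image_of_continuousOn
      (hφc.mono inter_subset_left)).isClosed, ?_⟩
    ext z
    constructor
    · rintro ⟨h1, h2⟩
      exact ⟨⟨_, ⟨(hχ z h2).1, h1⟩, (hχ z h2).2⟩, h2⟩
    · rintro ⟨⟨w, ⟨hw, hwt⟩, rfl⟩, h2⟩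
      refine ⟨?_, h2⟩
      have := hφi (hχ _ h2).1 hw (hχ _ h2).2
      rw [mem_preimage, this]
      exact hwt
  · intro z hz
    have hzD := hD.isClosed.frontier_subset hz
    obtain ⟨h1, h2⟩ := hχ z hzD
    rw [mem_closedBall_zero_iff] at h1
    refine le_antisymm h1 ?_
    by_contra! h
    have ho := bl_invdom φ (ball 0 1) isOpen_ball (hφc.mono ball_subset_closedBall)
      (hφi.mono ball_subset_closedBall)
    exact hz.2 (interior_maximal (image_mono ball_subset_closedBall) ho
      ⟨_, mem_ball_zero_iff.2 h, h2⟩)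

theorem bl_main_sep
    (x : ℝ) (ψ : ℝ × ℝ → ℂ)
    (hψc : ContinuousOn ψ (Icc 0 x ×ˢ Icc (0:ℝ) 1))
    (hψi : Set.InjOn ψ (Icc 0 x ×ˢ Icc (0:ℝ) 1))
    (φ : ℂ → ℂ)
    (hφc : ContinuousOn φ (closedBall 0 1))
    (hφi : Set.InjOn φ (closedBall 0 1))
    (hRD : ψ '' (Icc 0 x ×ˢ Icc (0:ℝ) 1) ⊆ φ '' closedBall 0 1)
    (hhb : ψ '' (Icc 0 x ×ˢ ({0, 1} : Set ℝ)) ⊆ frontier (φ '' closedBall 0 1))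
    (t : ℝ) (ht0 : 0 < t) (htx : t < x) :
    ∃ N : ℂ → ℂ, ContinuousOn N (φ '' closedBall 0 1 \ ψ '' ({t} ×ˢ Icc (0:ℝ) 1)) ∧
      (∀ z ∈ φ '' closedBall 0 1 \ ψ '' ({t} ×ˢ Icc (0:ℝ) 1), Complex.exp (N z) = 1) ∧
      N (ψ (0, 0)) ≠ N (ψ (x, 0)) := by
  obtain ⟨χ, hχc, hχ, hχf⟩ := bl_inverse φ hφc hφi
  set Q := Icc 0 x ×ˢ Icc (0:ℝ) 1 with hQ
  let ζ : ℝ × ℝ → ℂ := fun p => χ (ψ p)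
  have hζc : ContinuousOn ζ Q := hχc.comp hψc (fun p hp => hRD ⟨p, hp, rfl⟩)
  have hζφ : ∀ p ∈ Q, φ (ζ p) = ψ p := fun p hp => (hχ _ (hRD ⟨p, hp, rfl⟩)).2
  have hζi : InjOn ζ Q := by
    intro p hp q hq h
    apply hψi hp hq
    rw [← hζφ p hp, ← hζφ q hq, h]
  have hζ1 : ∀ p ∈ Q, ‖ζ p‖ ≤ 1 := fun p hp => by
    simpa using (hχ _ (hRD ⟨p, hp, rfl⟩)).1
  have hζb : ∀ s ∈ Icc 0 x, ∀ y ∈ ({0, 1} : Set ℝ), ‖ζ (s, y)‖ = 1 :=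
    fun s hs y hy => hχf _ (hhb ⟨(s, y), ⟨hs, hy⟩, rfl⟩)
  let σ : ℝ → ℝ := fun s => max 0 (min 1 s)
  have hσ : Continuous σ := by fun_prop
  have hσm : ∀ s, σ s ∈ Icc (0:ℝ) 1 :=
    fun s => ⟨le_max_left _ _, max_le zero_le_one (min_le_left _ _)⟩
  have hσe : ∀ s ∈ Icc (0:ℝ) 1, σ s = s := by
    intro s hs
    simp only [σ]
    rw [min_eq_right hs.2, max_eq_right hs.1]
  have htI : t ∈ Icc 0 x := ⟨ht0.le, htx.le⟩
  have h0I : (0:ℝ) ∈ Icc (0:ℝ) 1 := by simp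
  have h1I : (1:ℝ) ∈ Icc (0:ℝ) 1 := by simp
  let Γ : ℝ → ℂ := fun s => ζ (t, σ s)
  have hΓr : range Γ = (fun s => ζ (t, s)) '' Icc (0:ℝ) 1 := by
    ext z
    constructor
    · rintro ⟨s, rfl⟩
      exact ⟨σ s, hσm s, rfl⟩
    · rintro ⟨s, hs, rfl⟩
      exact ⟨s, by simp only [Γ]; rw [hσe s hs]⟩
  have hΓc : Continuous Γ :=
    hζc.comp_continuous (by fun_prop) (fun s => ⟨htI, hσm s⟩)
  have hΓK : IsCompact (range Γ) := by
    rw [hΓr]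
    exact isCompact_Icc.image_of_continuousOn
      (hζc.comp (by fun_prop) (fun s hs => ⟨htI, hs⟩))
  have hΓ0 : Γ 0 = ζ (t, 0) := by simp only [Γ]; rw [hσe 0 h0I]
  have hΓ1 : Γ 1 = ζ (t, 1) := by simp only [Γ]; rw [hσe 1 h1I]
  obtain ⟨M, d, hd0, hMc, hMe, him, hjump⟩ := bl_sep Γ hΓc hΓK
    (fun s => hζ1 _ ⟨htI, hσm s⟩)
    (by rw [hΓ0]; exact hζb t htI 0 (by simp)) (by rw [hΓ1]; exact hζb t htI 1 (by simp))
    (by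
      rw [hΓ0, hΓ1]
      intro h
      have := hζi ⟨htI, h0I⟩ ⟨htI, h1I⟩ h
      simp at this)
  have hmaps : MapsTo χ (φ '' closedBall 0 1 \ ψ '' ({t} ×ˢ Icc (0:ℝ) 1))
      (closedBall 0 1 \ range Γ) := by
    rintro z ⟨hz, hz2⟩
    refine ⟨(hχ z hz).1, ?_⟩
    rw [hΓr]
    rintro ⟨s, hs, h⟩
    apply hz2
    refine ⟨(t, s), ⟨rfl, hs⟩, ?_⟩
    rw [← (hχ z hz).2, ← h]
    exact (hζφ _ ⟨htI, hs⟩).symm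
  refine ⟨fun z => M (χ z), hMc.comp (hχc.mono sdiff_subset) hmaps,
    fun z hz => hMe _ (hmaps hz), ?_⟩
  rw [hΓ0, hΓ1] at *
  have hne : ∀ s ∈ Icc 0 x, ζ (t, 1) - ζ (s, 0) ≠ 0 := by
    intro s hs h
    have := hζi ⟨htI, h1I⟩ ⟨hs, h0I⟩ (sub_eq_zero.1 h)
    simp at this
  let r : ℝ → ℝ := fun s => (d * (ζ (t, 0) - ζ (s, 0)) / (ζ (t, 1) - ζ (s, 0))).re
  have hζs : ContinuousOn (fun s => ζ (s, 0)) (Icc 0 x) :=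
    hζc.comp (by fun_prop) (fun s hs => ⟨hs, h0I⟩)
  have hrc : ContinuousOn r (Icc 0 x) := by
    refine Complex.continuous_re.comp_continuousOn (ContinuousOn.div ?_ ?_ hne)
    · exact continuousOn_const.mul (continuousOn_const.sub hζs)
    · exact continuousOn_const.sub hζs
  have hri : InjOn r (Icc 0 x) := by
    intro s hs s' hs' h
    have h1 := him _ (hζb s hs 0 (by simp))
    have h2 := him _ (hζb s' hs' 0 (by simp))
    have h3 := Complex.ext h (h1.trans h2.symm)
    rw [div_eq_div_iff (hne s hs) (hne s' hs')] at h3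
    have hab : ζ (t, 0) - ζ (t, 1) ≠ 0 := by
      intro h
      have := hζi ⟨htI, h0I⟩ ⟨htI, h1I⟩ (sub_eq_zero.1 h)
      simp at this
    have h4 : d * (ζ (t, 0) - ζ (t, 1)) * (ζ (s, 0) - ζ (s', 0)) = 0 := by
      linear_combination h3
    have h5 := (mul_eq_zero.1 h4).resolve_left (mul_ne_zero hd0 hab)
    have := hζi ⟨hs, h0I⟩ ⟨hs', h0I⟩ (sub_eq_zero.1 h5)
    simpa using this
  have hrt : r t = 0 := by simp [r]
  have h0x : (0:ℝ) ∈ Icc 0 x := ⟨le_rfl, by linarith⟩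
  have hxx : x ∈ Icc 0 x := ⟨by linarith, le_rfl⟩
  have hnr : ∀ s ∈ Icc 0 x, s ≠ t → ζ (s, 0) ∉ range Γ := by
    intro s hs hst
    rw [hΓr]
    rintro ⟨y, hy, h⟩
    have := hζi ⟨htI, hy⟩ ⟨hs, h0I⟩ h
    simp only [Prod.mk.injEq] at this
    exact hst this.1.symm
  rcases hrc.strictMonoOn_of_injOn_Icc' (by linarith) hri with hmono | hanti
  · have a1 := hmono h0x htI ht0
    have a2 := hmono htI hxx htx
    rw [hrt] at a1 a2
    exact (hjump (ζ (x, 0)) (ζ (0, 0)) (hζb x hxx 0 (by simp)) (hζb 0 h0x 0 (by simp))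
      (hnr x hxx htx.ne') (hnr 0 h0x ht0.ne) a2 a1).symm
  · have a1 := hanti h0x htI ht0
    have a2 := hanti htI hxx htx
    rw [hrt] at a1 a2
    exact hjump (ζ (0, 0)) (ζ (x, 0)) (hζb 0 h0x 0 (by simp)) (hζb x hxx 0 (by simp))
      (hnr 0 h0x ht0.ne) (hnr x hxx htx.ne') a1 a2

/-- **Buffer Lemma (topological).** Let `R = ψ([0,x]×[0,1])` be a topological rectangle
inside a closed Jordan disk `D` with horizontal boundary on `∂D`, and let `O` be a
connected set disjoint from the horizontal boundary of `R` and meeting `∂D` off it. Then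
(i) the set `T` of parameters of vertical curves meeting `O` has order-convex complement
in `[0,x]`, and if `T ≠ ∅` then `0 ∈ T` or `x ∈ T` (one or two buffers); (ii) if moreover
`O` meets only one connected component of `∂D` minus the horizontal boundary, then `T`
itself is order-convex (a single buffer). -/
theorem buffer_lemma
    (x : ℝ) (hx : 0 < x)
    (ψ : ℝ × ℝ → ℂ)
    (hψc : ContinuousOn ψ (Icc 0 x ×ˢ Icc (0:ℝ) 1))
    (hψi : Set.InjOn ψ (Icc 0 x ×ˢ Icc (0:ℝ) 1))
    (φ : ℂ → ℂ)
    (hφc : ContinuousOn φ (closedBall 0 1))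
    (hφi : Set.InjOn φ (closedBall 0 1))
    (hRD : ψ '' (Icc 0 x ×ˢ Icc (0:ℝ) 1) ⊆ φ '' closedBall 0 1)
    (hhb : ψ '' (Icc 0 x ×ˢ ({0, 1} : Set ℝ)) ⊆ frontier (φ '' closedBall 0 1))
    (O : Set ℂ)
    (hO : IsConnected O)
    (hO1 : Disjoint O (ψ '' (Icc 0 x ×ˢ ({0, 1} : Set ℝ))))
    (hO2 : (O ∩ (frontier (φ '' closedBall 0 1) \
        ψ '' (Icc 0 x ×ˢ ({0, 1} : Set ℝ)))).Nonempty) :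
    (∀ t₁ t t₂ : ℝ, t₁ ∈ Icc 0 x → t₂ ∈ Icc 0 x → t₁ < t → t < t₂ →
        ¬(ψ '' ({t₁} ×ˢ Icc (0:ℝ) 1) ∩ O).Nonempty →
        ¬(ψ '' ({t₂} ×ˢ Icc (0:ℝ) 1) ∩ O).Nonempty →
        ¬(ψ '' ({t} ×ˢ Icc (0:ℝ) 1) ∩ O).Nonempty) ∧
    ((∃ t ∈ Icc (0:ℝ) x, (ψ '' ({t} ×ˢ Icc (0:ℝ) 1) ∩ O).Nonempty) →
        (ψ '' ({(0:ℝ)} ×ˢ Icc (0:ℝ) 1) ∩ O).Nonempty ∨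
        (ψ '' ({x} ×ˢ Icc (0:ℝ) 1) ∩ O).Nonempty) ∧
    ((∃ z ∈ frontier (φ '' closedBall 0 1) \ ψ '' (Icc 0 x ×ˢ ({0, 1} : Set ℝ)),
        O ∩ (frontier (φ '' closedBall 0 1) \ ψ '' (Icc 0 x ×ˢ ({0, 1} : Set ℝ))) ⊆
          connectedComponentIn
            (frontier (φ '' closedBall 0 1) \ ψ '' (Icc 0 x ×ˢ ({0, 1} : Set ℝ))) z) →
      ∀ t₁ t t₂ : ℝ, t₁ ∈ Icc 0 x → t₂ ∈ Icc 0 x → t₁ < t → t < t₂ →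
        (ψ '' ({t₁} ×ˢ Icc (0:ℝ) 1) ∩ O).Nonempty →
        (ψ '' ({t₂} ×ˢ Icc (0:ℝ) 1) ∩ O).Nonempty →
        (ψ '' ({t} ×ˢ Icc (0:ℝ) 1) ∩ O).Nonempty) := by
  have hDc : IsClosed (φ '' closedBall 0 1) :=
    ((isCompact_closedBall _ _).image_of_continuousOn hφc).isClosed
  have hopen : ∀ t₁ t₂ : ℝ, t₁ ∈ Icc 0 x → t₂ ∈ Icc 0 x →
      IsOpen (ψ '' (Ioo t₁ t₂ ×ˢ Ioo (0:ℝ) 1)) ∧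
      ψ '' (Ioo t₁ t₂ ×ˢ Ioo (0:ℝ) 1) ⊆ interior (φ '' closedBall 0 1) := by
    intro t₁ t₂ h₁ h₂
    have hsub : Ioo t₁ t₂ ×ˢ Ioo (0:ℝ) 1 ⊆ Icc 0 x ×ˢ Icc (0:ℝ) 1 :=
      prod_mono (fun s hs => ⟨h₁.1.trans hs.1.le, hs.2.le.trans h₂.2⟩) Ioo_subset_Icc_self
    have ho := bl_invdom_prod ψ _ (isOpen_Ioo.prod isOpen_Ioo) (hψc.mono hsub) (hψi.mono hsub)
    exact ⟨ho, interior_maximal ((image_mono hsub).trans hRD) ho⟩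
  have hav : ∀ s ∈ Icc 0 x, ∀ y ∈ Icc (0:ℝ) 1, ψ (s, y) ∈ O → y ∈ Ioo (0:ℝ) 1 := by
    intro s hs y hy hOy
    have hn : y ∉ ({0, 1} : Set ℝ) := fun h =>
      Set.disjoint_left.1 hO1 hOy ⟨(s, y), ⟨hs, h⟩, rfl⟩
    simp only [mem_insert_iff, mem_singleton_iff, not_or] at hn
    exact ⟨lt_of_le_of_ne hy.1 (Ne.symm hn.1), lt_of_le_of_ne hy.2 hn.2⟩
  have part1 : ∀ t₁ t t₂ : ℝ, t₁ ∈ Icc 0 x → t₂ ∈ Icc 0 x → t₁ < t → t < t₂ →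
        ¬(ψ '' ({t₁} ×ˢ Icc (0:ℝ) 1) ∩ O).Nonempty →
        ¬(ψ '' ({t₂} ×ˢ Icc (0:ℝ) 1) ∩ O).Nonempty →
        ¬(ψ '' ({t} ×ˢ Icc (0:ℝ) 1) ∩ O).Nonempty := by
    rintro t₁ t t₂ h₁ h₂ hlt₁ hlt₂ hn₁ hn₂ ⟨_, ⟨⟨s, y⟩, ⟨hs, hy⟩, rfl⟩, hp⟩
    simp only [mem_singleton_iff] at hs
    subst hs
    have hsub : Icc t₁ t₂ ×ˢ Icc (0:ℝ) 1 ⊆ Icc 0 x ×ˢ Icc (0:ℝ) 1 :=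
      prod_mono (Icc_subset_Icc h₁.1 h₂.2) le_rfl
    obtain ⟨hVo, hVi⟩ := hopen t₁ t₂ h₁ h₂
    have hKc : IsClosed (ψ '' (Icc t₁ t₂ ×ˢ Icc (0:ℝ) 1)) :=
      ((isCompact_Icc.prod isCompact_Icc).image_of_continuousOn (hψc.mono hsub)).isClosed
    have hcov : O ⊆ ψ '' (Ioo t₁ t₂ ×ˢ Ioo (0:ℝ) 1) ∪ (ψ '' (Icc t₁ t₂ ×ˢ Icc (0:ℝ) 1))ᶜ := by
      intro z hz
      by_cases hzK : z ∈ ψ '' (Icc t₁ t₂ ×ˢ Icc (0:ℝ) 1)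
      · left
        obtain ⟨⟨s', y'⟩, ⟨hs', hy'⟩, rfl⟩ := hzK
        refine ⟨(s', y'), ⟨⟨lt_of_le_of_ne hs'.1 ?_, lt_of_le_of_ne hs'.2 ?_⟩,
          hav s' (Icc_subset_Icc h₁.1 h₂.2 hs') y' hy' hz⟩, rfl⟩
        · intro h
          simp only at h
          exact hn₁ ⟨_, ⟨(s', y'), ⟨h.symm, hy'⟩, rfl⟩, hz⟩
        · intro h
          simp only at h
          exact hn₂ ⟨_, ⟨(s', y'), ⟨h, hy'⟩, rfl⟩, hz⟩
      · exact Or.inr hzK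
    have hOV := hO.isPreconnected.subset_left_of_subset_union hVo hKc.isOpen_compl
      (disjoint_compl_right.mono_left
        (image_mono (prod_mono Ioo_subset_Icc_self Ioo_subset_Icc_self))) hcov
      ⟨ψ (s, y), hp, ⟨(s, y), ⟨⟨hlt₁, hlt₂⟩,
        hav s ⟨h₁.1.trans hlt₁.le, hlt₂.le.trans h₂.2⟩ y hy hp⟩, rfl⟩⟩
    obtain ⟨z, hzO, hzf, -⟩ := hO2
    exact hzf.2 (hVi (hOV hzO))
  have h0x : (0:ℝ) ∈ Icc 0 x := ⟨le_rfl, hx.le⟩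
  have hxx : x ∈ Icc 0 x := ⟨hx.le, le_rfl⟩
  refine ⟨part1, ?_, ?_⟩
  · rintro ⟨t, ht, hne⟩
    by_contra! h
    have g1 := Set.not_nonempty_iff_eq_empty.2 h.1
    have g2 := Set.not_nonempty_iff_eq_empty.2 h.2
    rcases ht.1.eq_or_lt with h0 | h0
    · subst h0; exact g1 hne
    rcases ht.2.eq_or_lt with h1 | h1
    · subst h1; exact g2 hne
    exact part1 0 t x h0x hxx h0 h1 g1 g2 hne
  · rintro ⟨z₀, hz₀, hcomp⟩ t₁ t t₂ h₁ h₂ hlt₁ hlt₂ hn₁ hn₂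
    by_contra hnt
    have ht0 : 0 < t := h₁.1.trans_lt hlt₁
    have htx : t < x := hlt₂.trans_le h₂.2
    obtain ⟨N, hNc, hNe, hNne⟩ := bl_main_sep x ψ hψc hψi φ hφc hφi hRD hhb t ht0 htx
    set D := φ '' closedBall 0 1 with hD
    set G := ψ '' ({t} ×ˢ Icc (0:ℝ) 1) with hG
    set H := ψ '' (Icc 0 x ×ˢ ({0, 1} : Set ℝ)) with hH
    have htI : t ∈ Icc 0 x := ⟨ht0.le, htx.le⟩
    have h0I : (0:ℝ) ∈ Icc (0:ℝ) 1 := by simp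
    have hfr : frontier D \ H ⊆ D \ G := by
      rintro z ⟨hz, hzH⟩
      refine ⟨hDc.frontier_subset hz, ?_⟩
      rintro ⟨⟨s, y⟩, ⟨hs, hy⟩, rfl⟩
      simp only [mem_singleton_iff] at hs
      subst hs
      have hn : y ∉ ({0, 1} : Set ℝ) := fun h => hzH ⟨(s, y), ⟨htI, h⟩, rfl⟩
      simp only [mem_insert_iff, mem_singleton_iff, not_or] at hn
      exact hz.2 ((hopen 0 x h0x hxx).2 ⟨(s, y), ⟨⟨ht0, htx⟩,
        lt_of_le_of_ne hy.1 (Ne.symm hn.1), lt_of_le_of_ne hy.2 hn.2⟩, rfl⟩)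
    have hC : ∀ z ∈ O ∩ (frontier D \ H), N z = N z₀ := by
      intro z hz
      exact bl_const isPreconnected_connectedComponentIn
        (hNc.mono ((connectedComponentIn_subset _ _).trans hfr)) 1
        (fun w hw => hNe w (hfr (connectedComponentIn_subset _ _ hw)))
        (hcomp hz) (mem_connectedComponentIn hz₀)
    -- any point of `O` in `D` has the same value of `N`
    have hall : ∀ z ∈ O ∩ D, N z = N z₀ := by
      rintro z ⟨hzO, hzD⟩
      by_contra hzN
      have hOG : ∀ w ∈ O, w ∉ G := fun w hw hwG => hnt ⟨w, hwG, hw⟩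
      have hGc : IsClosed G := ((isCompact_singleton.prod isCompact_Icc).image_of_continuousOn
        (hψc.mono (prod_mono (singleton_subset_iff.2 htI) le_rfl))).isClosed
      have hNc' : ContinuousOn (fun z => N z - N z₀) (D \ G) := hNc.sub continuousOn_const
      have hval : ∀ w ∈ D \ G, ‖N w - N z₀‖ < 1 → N w = N z₀ := by
        intro w hw hlt
        have he : Complex.exp (N w - N z₀) = 1 := by
          rw [Complex.exp_sub, hNe w hw, hNe z₀ (hfr hz₀), div_one]
        obtain ⟨n, hn⟩ := Complex.exp_eq_one_iff.1 he
        rw [hn] at hlt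
        have hnorm : ‖(n:ℂ) * (2 * Real.pi * Complex.I)‖ = |(n:ℝ)| * (2 * Real.pi) := by
          simp [abs_of_pos Real.pi_pos]
        rw [hnorm] at hlt
        have hn0 : n = 0 := by
          by_contra hn0
          have : (1:ℝ) ≤ |(n:ℝ)| := by exact_mod_cast Int.one_le_abs hn0
          nlinarith [Real.pi_gt_three]
        rw [hn0] at hn
        simpa [sub_eq_zero] using hn
      obtain ⟨U, hU, hU2⟩ := (_root_.continuousOn_iff'.1 hNc') (ball 0 1) isOpen_ball
      obtain ⟨W, hW, hW2⟩ := (_root_.continuousOn_iff'.1 hNc') {0}ᶜ isOpen_compl_singleton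
      have memU : ∀ w ∈ D \ G, (w ∈ U ↔ N w = N z₀) := by
        intro w hw
        constructor
        · intro h
          have : w ∈ (fun z => N z - N z₀) ⁻¹' ball 0 1 ∩ (D \ G) := by rw [hU2]; exact ⟨h, hw⟩
          exact hval w hw (by simpa using this.1)
        · intro h
          have : w ∈ (fun z => N z - N z₀) ⁻¹' ball 0 1 ∩ (D \ G) := ⟨by simp [h], hw⟩
          rw [hU2] at this
          exact this.1
      have memW : ∀ w ∈ D \ G, (w ∈ W ↔ N w ≠ N z₀) := by
        intro w hw
        constructor
        · intro h
          have : w ∈ (fun z => N z - N z₀) ⁻¹' {0}ᶜ ∩ (D \ G) := by rw [hW2]; exact ⟨h, hw⟩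
          simpa [sub_eq_zero] using this.1
        · intro h
          have : w ∈ (fun z => N z - N z₀) ⁻¹' {0}ᶜ ∩ (D \ G) :=
            ⟨by simpa [sub_eq_zero] using h, hw⟩
          rw [hW2] at this
          exact this.1
      have hinner : ∀ w ∈ O, w ∈ D → N w ≠ N z₀ → w ∈ interior D := by
        intro w hw hwD hwN
        by_contra hni
        exact hwN (hC w ⟨hw, ⟨subset_closure hwD, hni⟩, fun h => Set.disjoint_left.1 hO1 hw h⟩)
      have hcov : O ⊆ ((W ∩ interior D) \ G) ∪ ((U ∪ Dᶜ) \ G) := by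
        intro w hw
        have hwG := hOG w hw
        by_cases hwD : w ∈ D
        · by_cases hwN : N w = N z₀
          · exact Or.inr ⟨Or.inl ((memU w ⟨hwD, hwG⟩).2 hwN), hwG⟩
          · exact Or.inl ⟨⟨(memW w ⟨hwD, hwG⟩).2 hwN, hinner w hw hwD hwN⟩, hwG⟩
        · exact Or.inr ⟨Or.inr hwD, hwG⟩
      have hdis : Disjoint ((W ∩ interior D) \ G) ((U ∪ Dᶜ) \ G) := by
        rw [Set.disjoint_left]
        rintro w ⟨⟨hwW, hwi⟩, hwG⟩ ⟨hw2, -⟩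
        have hwD := interior_subset hwi
        rcases hw2 with hwU | hwD'
        · exact (memW w ⟨hwD, hwG⟩).1 hwW ((memU w ⟨hwD, hwG⟩).1 hwU)
        · exact hwD' hwD
      have hsub := hO.isPreconnected.subset_left_of_subset_union
        ((hW.inter isOpen_interior).sdiff hGc) ((hU.union hDc.isOpen_compl).sdiff hGc) hdis hcov
        ⟨z, hzO, ⟨(memW z ⟨hzD, hOG z hzO⟩).2 hzN, hinner z hzO hzD hzN⟩, hOG z hzO⟩
      obtain ⟨w, hwO, hwf, -⟩ := hO2
      exact hwf.2 (hsub hwO).1.2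
    -- values on the two sides
    have hside : ∀ I : Set ℝ, IsPreconnected I → I ⊆ Icc 0 x → t ∉ I →
        ∀ s ∈ I, ∀ s' ∈ I, ∀ y ∈ Icc (0:ℝ) 1, N (ψ (s, y)) = N (ψ (s', 0)) := by
      intro I hI hIx htI' s hs s' hs' y hy
      have hsub : I ×ˢ Icc (0:ℝ) 1 ⊆ Icc 0 x ×ˢ Icc (0:ℝ) 1 := prod_mono hIx le_rfl
      have hm : MapsTo ψ (I ×ˢ Icc (0:ℝ) 1) (D \ G) := by
        rintro ⟨p, q⟩ hpq
        refine ⟨hRD ⟨(p, q), hsub hpq, rfl⟩, ?_⟩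
        rintro ⟨⟨p', q'⟩, ⟨hp', hq'⟩, h⟩
        simp only [mem_singleton_iff] at hp'
        subst hp'
        have := hψi ⟨htI, hq'⟩ (hsub hpq) h
        simp only [Prod.mk.injEq] at this
        exact htI' (this.1 ▸ hpq.1)
      exact bl_const (F := fun p => N (ψ p)) (hI.prod isPreconnected_Icc)
        (hNc.comp (hψc.mono hsub) hm) 1 (fun p hp => hNe _ (hm hp))
        (a := (s, y)) (b := (s', 0)) ⟨hs, hy⟩ ⟨hs', h0I⟩
    obtain ⟨_, ⟨⟨s₁, y₁⟩, ⟨hs₁, hy₁⟩, rfl⟩, hp₁⟩ := hn₁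
    obtain ⟨_, ⟨⟨s₂, y₂⟩, ⟨hs₂, hy₂⟩, rfl⟩, hp₂⟩ := hn₂
    simp only [mem_singleton_iff] at hs₁ hs₂
    subst hs₁ hs₂
    have e1 := hside (Ico 0 t) isPreconnected_Ico (fun s hs => ⟨hs.1, hs.2.le.trans htx.le⟩)
      (by simp) s₁ ⟨h₁.1, hlt₁⟩ 0 ⟨le_rfl, ht0⟩ y₁ hy₁
    have e2 := hside (Ioc t x) isPreconnected_Ioc (fun s hs => ⟨ht0.le.trans hs.1.le, hs.2⟩)
      (by simp) s₂ ⟨hlt₂, h₂.2⟩ x ⟨htx, le_rfl⟩ y₂ hy₂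
    have f1 := hall _ ⟨hp₁, hRD ⟨(s₁, y₁), ⟨h₁, hy₁⟩, rfl⟩⟩
    have f2 := hall _ ⟨hp₂, hRD ⟨(s₂, y₂), ⟨h₂, hy₂⟩, rfl⟩⟩
    exact hNne (by rw [← e1, ← e2, f1, f2])
end
end

section
/- Enclosed annuli. Let ε > 0, let A and B be closed topological annuli in ℂ, let U be a bounded connected component of ℂ ∖ A and let V be a bounded connected component of ℂ ∖ B. Assume that U ∪ V is an open set homeomorphic to ℝ² and that A ∪ U ∪ B ∪ V is a closed Jordan disk. Put A □ B := (A ∪ U ∪ B ∪ V) ∖ (U ∪ V), the annulus enclosed by A and B. If mod(A) ≥ 2ε and mod(B) ≥ 2ε, then W(Γ) ≤ 1/ε, where Γ is the family of curves contained in A □ B joining the frontier of U ∪ V to the frontier of A ∪ U ∪ B ∪ V; i.e., the enclosed annulus A □ B has modulus at least ε. -/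
noncomputable section

open MeasureTheory Set Metric Bornology
open scoped ENNReal NNReal

/-- The carrier of the closed topological annulus parametrized by `α` (on the standard
round annulus `{1 ≤ |z| ≤ 2}`). -/
def annCarrier (α : ℂ → ℂ) : Set ℂ := α '' (closedBall 0 2 \ ball 0 1)

/-- The modulus of the closed topological annulus parametrized by `α`. -/
def annModulus (α : ℂ → ℂ) : ℝ≥0∞ :=
  (widthIn (annCarrier α) (α '' sphere 0 1) (α '' sphere 0 2))⁻¹

/-! ### Continuous logarithms -/

lemma log_homotopy {X : Type*} [TopologicalSpace X] (H : unitInterval × X → ℂ)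
    (hH : Continuous H) (h0 : ∀ a, H a ≠ 0) (u : X → ℂ) (hu : Continuous u)
    (hu0 : ∀ x, H (0, x) = Complex.exp (u x)) :
    ∃ v : X → ℂ, Continuous v ∧ ∀ x, H (1, x) = Complex.exp (v x) := by
  let H' : C(unitInterval × X, {z : ℂ // z ≠ 0}) :=
    ⟨fun a => ⟨H a, h0 a⟩, by fun_prop⟩
  let u' : C(X, ℂ) := ⟨u, hu⟩
  have h00 : ∀ x, H' (0, x) = (fun z : ℂ ↦ (⟨_, z.exp_ne_zero⟩ : {z : ℂ // z ≠ 0})) (u' x) := by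
    intro x; exact Subtype.ext (hu0 x)
  let L := Complex.isCoveringMap_exp.liftHomotopy H' u' h00
  refine ⟨fun x => L (1, x), by fun_prop, fun x => ?_⟩
  have := congr_fun (Complex.isCoveringMap_exp.liftHomotopy_lifts H' u' h00) (1, x)
  exact (congr_arg Subtype.val this).symm

lemma log_plane (f : ℂ → ℂ) (hf : Continuous f) (h0 : ∀ z, f z ≠ 0) :
    ∃ L : ℂ → ℂ, Continuous L ∧ ∀ z, f z = Complex.exp (L z) := by
  obtain ⟨v, hv, hv'⟩ := log_homotopy (fun a : unitInterval × ℂ => f ((a.1 : ℝ) * a.2))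
    (by fun_prop) (fun a => h0 _) (fun _ => Complex.log (f 0)) continuous_const
    (fun x => by simp [Complex.exp_log (h0 0)])
  exact ⟨v, hv, fun z => by simpa using hv' z⟩

lemma log_unique {X : Type*} [TopologicalSpace X] [PreconnectedSpace X] (u v : X → ℂ)
    (hu : Continuous u) (hv : Continuous v) (h : ∀ x, Complex.exp (u x) = Complex.exp (v x))
    (x₀ : X) (h0 : u x₀ = v x₀) : u = v :=
  Complex.isCoveringMap_exp.eq_of_comp_eq hu hv (by ext x; exact h x) x₀ h0

/-- `exp (i n θ)` has no periodic logarithm unless `n = 0`. -/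
lemma no_periodic_log (n : ℤ) (c : ℂ) (g : ℝ → ℂ) (hg : Continuous g)
    (hper : g (2 * Real.pi) = g 0)
    (h : ∀ θ : ℝ, c * Complex.exp (n * (θ * Complex.I)) = Complex.exp (g θ)) : n = 0 := by
  have h0 := h 0
  simp at h0
  have := log_unique (fun θ : ℝ => g 0 + n * (θ * Complex.I)) g (by fun_prop) hg
    (fun θ => by rw [← h θ, Complex.exp_add, ← h0]) 0 (by simp)
  have h2 := congr_fun this (2 * Real.pi)
  simp only [hper] at h2
  have h3 : (n : ℂ) * (((2 * Real.pi : ℝ) : ℂ) * Complex.I) = 0 := by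
    linear_combination h2
  have hpi := Real.pi_ne_zero
  simpa [hpi] using h3

lemma mem_ann {w : ℂ} : w ∈ closedBall (0:ℂ) 2 \ ball 0 1 ↔ 1 ≤ ‖w‖ ∧ ‖w‖ ≤ 2 := by
  simp [and_comm]

lemma ann_class (f : ℂ → ℂ) (hf : ContinuousOn f (closedBall 0 2 \ ball 0 1))
    (hf0 : ∀ w ∈ closedBall (0:ℂ) 2 \ ball 0 1, f w ≠ 0) :
    ∃ n : ℤ, ∃ g : ℂ → ℂ, ContinuousOn g (closedBall 0 2 \ ball 0 1) ∧
      ∀ w ∈ closedBall (0:ℂ) 2 \ ball 0 1, f w = w ^ n * Complex.exp (g w) := by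
  let c : ℂ → ℂ := fun ζ => ((max 0 (min (Real.log 2) ζ.re) : ℝ) : ℂ) + ζ.im * Complex.I
  have hc : Continuous c := by fun_prop
  have hl2 : 0 < Real.log 2 := Real.log_pos (by norm_num)
  have hmem : ∀ ζ, Complex.exp (c ζ) ∈ closedBall (0:ℂ) 2 \ ball 0 1 := by
    intro ζ
    rw [mem_ann, Complex.norm_exp]
    have : (c ζ).re = max 0 (min (Real.log 2) ζ.re) := by simp [c]
    rw [this]
    refine ⟨Real.one_le_exp (le_max_left _ _), ?_⟩
    calc Real.exp _ ≤ Real.exp (Real.log 2) := Real.exp_le_exp.2 (by simp [hl2.le])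
      _ = 2 := Real.exp_log (by norm_num)
  obtain ⟨L, hL, hL'⟩ := log_plane (fun ζ => f (Complex.exp (c ζ)))
    (hf.comp_continuous (by fun_prop) hmem) (fun ζ => hf0 _ (hmem ζ))
  have hper : ∀ ζ, Complex.exp (L (ζ + 2 * Real.pi * Complex.I)) = Complex.exp (L ζ) := by
    intro ζ
    rw [← hL', ← hL']
    congr 1
    have : c (ζ + 2 * Real.pi * Complex.I) = c ζ + 2 * Real.pi * Complex.I := by
      simp [c]; ring
    rw [this, Complex.exp_periodic]
  obtain ⟨n, hn⟩ := Complex.exp_eq_exp_iff_exists_int.1 (hper 0)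
  have hLn : ∀ ζ, L (ζ + 2 * Real.pi * Complex.I) = L ζ + n * (2 * Real.pi * Complex.I) := by
    have := log_unique (fun ζ => L (ζ + 2 * Real.pi * Complex.I))
      (fun ζ => L ζ + n * (2 * Real.pi * Complex.I)) (by fun_prop) (by fun_prop)
      (fun ζ => by
        show Complex.exp (L _) = Complex.exp (L ζ + n * (2 * Real.pi * Complex.I))
        rw [hper, Complex.exp_add, Complex.exp_int_mul_two_pi_mul_I, mul_one]) 0 hn
    exact fun ζ => congr_fun this ζ
  let G : ℂ → ℂ := fun ζ => L ζ - n * ζ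
  have hG : Continuous G := by fun_prop
  have hGp : Function.Periodic G (2 * Real.pi * Complex.I) := by
    intro ζ; simp only [G, hLn]; ring
  refine ⟨n, fun w => G (Complex.log w), ?_, ?_⟩
  · intro w hw
    have hw0 : w ≠ 0 := by
      rintro rfl; rw [mem_ann] at hw; norm_num at hw
    apply ContinuousAt.continuousWithinAt
    by_cases hs : w ∈ Complex.slitPlane
    · exact hG.continuousAt.comp (continuousAt_clog hs)
    · have hs' : -w ∈ Complex.slitPlane :=
        (Complex.mem_slitPlane_or_neg_mem_slitPlane hw0).resolve_left hs
      have hcont : ContinuousAt (fun w => G (Complex.log (-w) + Real.pi * Complex.I)) w := by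
        refine hG.continuousAt.comp (ContinuousAt.add ?_ continuousAt_const)
        exact ContinuousAt.comp (f := fun w : ℂ => -w) (continuousAt_clog hs') (by fun_prop)
      refine hcont.congr ?_
      filter_upwards [isOpen_ne.mem_nhds hw0] with v hv
      have : Complex.exp (Complex.log v) = Complex.exp (Complex.log (-v) + Real.pi * Complex.I) := by
        rw [Complex.exp_add, Complex.exp_log hv, Complex.exp_log (neg_ne_zero.2 hv),
          Complex.exp_pi_mul_I]; ring
      obtain ⟨k, hk⟩ := Complex.exp_eq_exp_iff_exists_int.1 this
      show G _ = G _
      rw [hk]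
      exact ((hGp.int_mul k) _).symm
  · intro w hw
    have hw0 : w ≠ 0 := by
      rintro rfl; rw [mem_ann] at hw; norm_num at hw
    have h1 := hL' (Complex.log w)
    have hcl : c (Complex.log w) = Complex.log w := by
      rw [mem_ann] at hw
      have h2 : 0 ≤ Real.log ‖w‖ := Real.log_nonneg hw.1
      have h3 : Real.log ‖w‖ ≤ Real.log 2 := Real.log_le_log (by linarith) hw.2
      apply Complex.ext <;> simp [c, Complex.log_re, h2, h3]
    simp only [hcl, Complex.exp_log hw0] at h1
    rw [h1]
    simp only [G, Complex.exp_sub, Complex.exp_int_mul, Complex.exp_log hw0]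
    field_simp [zpow_ne_zero n hw0]

/-! ### Plane topology -/

lemma borsuk_extension (K U : Set ℂ) (hK : IsClosed K) (hU : IsOpen U) (hb : IsBounded U)
    (hfr : frontier U ⊆ K) (p : ℂ) (hp : p ∈ U) (m : ℤ) (f k : ℂ → ℂ)
    (hf : ContinuousOn f (K ∪ U)) (hf0 : ∀ z ∈ K ∪ U, f z ≠ 0) (hk : ContinuousOn k K)
    (h : ∀ z ∈ K, (z - p) ^ m * f z = Complex.exp (k z)) : m = 0 := by
  classical
  obtain ⟨k', hk'⟩ := ContinuousMap.exists_restrict_eq hK ⟨K.domRestrict k, hk.domRestrict⟩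
  have hkk : ∀ z ∈ K, k' z = k z := fun z hz => by
    exact DFunLike.congr_fun hk' ⟨z, hz⟩
  have hcl : closure U ⊆ K ∪ U := by
    intro z hz
    by_cases hzU : z ∈ U
    · exact Or.inr hzU
    · exact Or.inl (hfr ⟨hz, by rwa [hU.interior_eq]⟩)
  let G : ℂ → ℂ := fun z => if z ∈ U then Complex.exp (k' z) / f z else (z - p) ^ m
  have hpU : ∀ z, z ∉ U → z - p ≠ 0 := fun z hz h => hz (by rwa [sub_eq_zero.1 h])
  have hG1 : ∀ z ∈ closure U, G z = Complex.exp (k' z) / f z := by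
    intro z hz
    by_cases hzU : z ∈ U
    · simp [G, hzU]
    · have hzK : z ∈ K := hfr ⟨hz, by rwa [hU.interior_eq]⟩
      simp only [G, hzU, if_false]
      rw [eq_div_iff (hf0 z (Or.inl hzK)), hkk z hzK, h z hzK]
  have hG2 : ∀ z ∈ Uᶜ, G z = (z - p) ^ m := by
    intro z hz
    simp only [G, if_neg hz]
  have hGc : Continuous G := by
    rw [← continuousOn_univ]
    have hun : (univ : Set ℂ) = closure U ∪ Uᶜ := by
      ext z; by_cases hz : z ∈ U
      · simp [subset_closure hz]
      · simp [hz]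
    rw [hun]
    apply ContinuousOn.union_of_isClosed
    · refine ContinuousOn.congr ?_ hG1
      exact ContinuousOn.div (by fun_prop) (hf.mono hcl) (fun z hz => hf0 z (hcl hz))
    · refine ContinuousOn.congr ?_ hG2
      exact ContinuousOn.zpow₀ (by fun_prop) m (fun z hz => Or.inl (hpU z hz))
    · exact isClosed_closure
    · exact hU.isClosed_compl
  have hG0 : ∀ z, G z ≠ 0 := by
    intro z
    by_cases hz : z ∈ U
    · rw [hG1 z (subset_closure hz)]
      exact div_ne_zero (Complex.exp_ne_zero _) (hf0 z (Or.inr hz))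
    · rw [hG2 z hz]
      exact zpow_ne_zero _ (hpU z hz)
  obtain ⟨L, hL, hL'⟩ := log_plane G hGc hG0
  obtain ⟨R, hR⟩ := hb.subset_ball p
  have hRpos : 0 < R := by
    have := hR hp
    simpa using this
  refine no_periodic_log m ((R : ℂ) ^ m)
    (fun θ : ℝ => L (p + R * Complex.exp (θ * Complex.I))) (by fun_prop) ?_ ?_
  · have : Complex.exp (((2 * Real.pi : ℝ) : ℂ) * Complex.I) = 1 := by
      push_cast; exact Complex.exp_two_pi_mul_I
    simp only [this]; simp
  · intro θ
    rw [← hL', hG2, add_sub_cancel_left, mul_zpow, ← Complex.exp_int_mul]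
    intro hmem
    have := hR hmem
    simp [Complex.norm_exp_ofReal_mul_I, abs_of_pos hRpos] at this

lemma log_of_unbounded (K : Set ℂ) (hK : IsCompact K) (p : ℂ)
    (hb : ¬ IsBounded (connectedComponentIn Kᶜ p)) :
    ∃ v : K → ℂ, Continuous v ∧ ∀ z : K, (z : ℂ) - p = Complex.exp (v z) := by
  have hp : p ∈ Kᶜ := by
    by_contra hp
    rw [connectedComponentIn_eq_empty hp] at hb
    exact hb isBounded_empty
  obtain ⟨R, hR0, hR⟩ := hK.isBounded.subset_ball_lt 0 0
  have hex : ∃ q ∈ connectedComponentIn Kᶜ p, R ≤ ‖q‖ := by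
    by_contra! hcon
    exact hb ((isBounded_ball (x := (0:ℂ)) (r := R)).subset
      (fun q hq => by simpa using hcon q hq))
  obtain ⟨q, hq, hqR⟩ := hex
  have hq0 : q ≠ 0 := by rintro rfl; simp at hqR; linarith
  have hopen : IsOpen (connectedComponentIn Kᶜ p) := hK.isClosed.isOpen_compl.connectedComponentIn
  have hconn : IsConnected (connectedComponentIn Kᶜ p) := isConnected_connectedComponentIn_iff.2 hp
  obtain ⟨η, hη⟩ := (hopen.isConnected_iff_isPathConnected.1 hconn).joinedIn q hq p
    (mem_connectedComponentIn hp)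
  have hηK : ∀ t, η t ∉ K := fun t => connectedComponentIn_subset _ _ (hη t)
  have hsl : ∀ z : K, 1 + -((z : ℂ) / q) ∈ Complex.slitPlane := by
    intro z
    apply Complex.mem_slitPlane_of_norm_lt_one
    have hz := hR z.2
    rw [mem_ball_zero_iff] at hz
    rw [norm_neg, norm_div, div_lt_one (by positivity)]
    linarith
  obtain ⟨v, hv, hv'⟩ := log_homotopy (fun a : unitInterval × K => (a.2 : ℂ) - η a.1)
    (by fun_prop) (fun a h => hηK a.1 (by rw [← sub_eq_zero.1 h]; exact a.2.2))
    (fun z => Complex.log (-q) + Complex.log (1 + -((z : ℂ) / q)))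
    (continuous_const.add (Continuous.clog (by fun_prop) hsl))
    (fun z => by
      rw [Complex.exp_add, Complex.exp_log (neg_ne_zero.2 hq0),
        Complex.exp_log (Complex.slitPlane_ne_zero (hsl z))]
      simp only [Path.source]
      field_simp; ring)
  exact ⟨v, hv, fun z => by simpa using hv' z⟩

lemma frontier_comp_subset (K : Set ℂ) (hK : IsClosed K) (p : ℂ) :
    frontier (connectedComponentIn Kᶜ p) ⊆ K := by
  intro x hx
  by_contra hxK
  have hopen : ∀ y, IsOpen (connectedComponentIn Kᶜ y) := fun y =>
    hK.isOpen_compl.connectedComponentIn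
  have h1 : x ∈ connectedComponentIn Kᶜ x := mem_connectedComponentIn hxK
  obtain ⟨y, hy1, hy2⟩ := mem_closure_iff.1 hx.1 _ (hopen x) h1
  have h2 := connectedComponentIn_eq hy1
  have h3 := connectedComponentIn_eq hy2
  apply hx.2
  rw [(hopen p).interior_eq, h3, ← h2]
  exact h1

lemma isCompact_ann : IsCompact (closedBall (0:ℂ) 2 \ ball 0 1) :=
  (isCompact_closedBall 0 2).diff isOpen_ball

lemma continuousOn_invFunOn_image (α : ℂ → ℂ) (R : Set ℂ) (hR : IsCompact R) (hc : ContinuousOn α R)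
    (hi : InjOn α R) : ContinuousOn (Function.invFunOn α R) (α '' R) := by
  rw [continuousOn_iff_isClosed]
  intro t ht
  refine ⟨α '' (R ∩ t), ((hR.inter_right ht).image_of_continuousOn
    (hc.mono inter_subset_left)).isClosed, ?_⟩
  ext z
  constructor
  · rintro ⟨h1, w, hw, rfl⟩
    rw [mem_preimage, hi.leftInvOn_invFunOn hw] at h1
    exact ⟨⟨w, ⟨hw, h1⟩, rfl⟩, ⟨w, hw, rfl⟩⟩
  · rintro ⟨⟨w, ⟨hw, h1⟩, rfl⟩, -⟩
    refine ⟨?_, ⟨w, hw, rfl⟩⟩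
    rw [mem_preimage, hi.leftInvOn_invFunOn hw]
    exact h1

section annulus

variable (α : ℂ → ℂ)

lemma annCarrier_compact (hc : ContinuousOn α (closedBall 0 2 \ ball 0 1)) :
    IsCompact (annCarrier α) := isCompact_ann.image_of_continuousOn hc

/-- The class of `z - p` on the annulus. -/
lemma point_class (hc : ContinuousOn α (closedBall 0 2 \ ball 0 1))
    (hi : Set.InjOn α (closedBall 0 2 \ ball 0 1)) (p : ℂ) (hp : p ∉ annCarrier α) :
    ∃ n : ℤ, ∃ g : ℂ → ℂ, ContinuousOn g (annCarrier α) ∧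
      ∀ w ∈ closedBall (0:ℂ) 2 \ ball 0 1, α w - p = w ^ n * Complex.exp (g (α w)) := by
  obtain ⟨n, g, hg, hg'⟩ := ann_class (fun w => α w - p) (by fun_prop)
    (fun w hw h => hp ⟨w, hw, sub_eq_zero.1 h⟩)
  refine ⟨n, fun z => g (Function.invFunOn α (closedBall 0 2 \ ball 0 1) z), ?_, ?_⟩
  · refine hg.comp (continuousOn_invFunOn_image α _ isCompact_ann hc hi) ?_
    rintro _ ⟨w, hw, rfl⟩
    rw [hi.leftInvOn_invFunOn hw]; exact hw
  · intro w hw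
    simp only [hi.leftInvOn_invFunOn hw]
    exact hg' w hw

lemma ann_ne_zero {w : ℂ} (hw : w ∈ closedBall (0:ℂ) 2 \ ball 0 1) : w ≠ 0 := by
  rintro rfl; rw [mem_ann] at hw; norm_num at hw

lemma class_ne_zero (hc : ContinuousOn α (closedBall 0 2 \ ball 0 1)) (p : ℂ)
    (hp : p ∉ annCarrier α)
    (hb : IsBounded (connectedComponentIn (annCarrier α)ᶜ p)) (n : ℤ) (g : ℂ → ℂ)
    (hg : ContinuousOn g (annCarrier α))
    (h : ∀ w ∈ closedBall (0:ℂ) 2 \ ball 0 1, α w - p = w ^ n * Complex.exp (g (α w))) :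
    n ≠ 0 := by
  rintro rfl
  have hcl := (annCarrier_compact α hc).isClosed
  have := borsuk_extension (annCarrier α) (connectedComponentIn (annCarrier α)ᶜ p) hcl
    hcl.isOpen_compl.connectedComponentIn hb (frontier_comp_subset _ hcl p) p
    (mem_connectedComponentIn hp) 1 (fun _ => 1) g (by fun_prop) (by simp) hg
    (by rintro _ ⟨w, hw, rfl⟩; simpa using h w hw)
  exact one_ne_zero this

/-- The complement of an annulus has at most one bounded component. -/
lemma bounded_comp_unique (hc : ContinuousOn α (closedBall 0 2 \ ball 0 1))
    (hi : Set.InjOn α (closedBall 0 2 \ ball 0 1)) (p q : ℂ) (hp : p ∉ annCarrier α)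
    (hq : q ∉ annCarrier α)
    (hbp : IsBounded (connectedComponentIn (annCarrier α)ᶜ p))
    (hbq : IsBounded (connectedComponentIn (annCarrier α)ᶜ q)) :
    q ∈ connectedComponentIn (annCarrier α)ᶜ p := by
  by_contra hqp
  obtain ⟨n, g, hg, hg'⟩ := point_class α hc hi p hp
  obtain ⟨m, k, hk, hk'⟩ := point_class α hc hi q hq
  have hm := class_ne_zero α hc q hq hbq m k hk hk'
  have hcl := (annCarrier_compact α hc).isClosed
  have hne : ∀ z ∈ annCarrier α ∪ connectedComponentIn (annCarrier α)ᶜ p, z - q ≠ 0 := by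
    rintro z (hz | hz) h
    · exact hq (by rwa [← sub_eq_zero.1 h])
    · exact hqp (by rwa [← sub_eq_zero.1 h])
  refine hm (borsuk_extension (annCarrier α) (connectedComponentIn (annCarrier α)ᶜ p) hcl
    hcl.isOpen_compl.connectedComponentIn hbp (frontier_comp_subset _ hcl p) p
    (mem_connectedComponentIn hp) m (fun z => (z - q) ^ (-n)) (fun z => m * g z - n * k z)
    (ContinuousOn.zpow₀ (by fun_prop) _ (fun z hz => Or.inl (hne z hz)))
    (fun z hz => zpow_ne_zero _ (hne z hz)) (by fun_prop) ?_)
  rintro _ ⟨w, hw, rfl⟩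
  have hw0 := ann_ne_zero hw
  rw [hg' w hw, hk' w hw, mul_zpow, mul_zpow, Complex.exp_sub, Complex.exp_int_mul,
    Complex.exp_int_mul, ← zpow_mul, ← zpow_mul, zpow_neg (Complex.exp _), div_eq_mul_inv]
  have : w ^ (n * m) * w ^ (m * -n) = 1 := by
    rw [← zpow_add₀ hw0]; ring_nf; simp
  linear_combination (Complex.exp (g (α w)) ^ m * (Complex.exp (k (α w)) ^ n)⁻¹) * this

/-- The boundary circles of an annulus separate its bounded complementary component from
infinity. -/
lemma circle_separates (hc : ContinuousOn α (closedBall 0 2 \ ball 0 1))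
    (hi : Set.InjOn α (closedBall 0 2 \ ball 0 1)) (p : ℂ) (hp : p ∉ annCarrier α)
    (hbp : IsBounded (connectedComponentIn (annCarrier α)ᶜ p)) (r : ℝ) (hr1 : 1 ≤ r)
    (hr2 : r ≤ 2) :
    IsBounded (connectedComponentIn (α '' sphere 0 r)ᶜ p) := by
  by_contra hb
  obtain ⟨n, g, hg, hg'⟩ := point_class α hc hi p hp
  have hn := class_ne_zero α hc p hp hbp n g hg hg'
  have hsub : sphere (0:ℂ) r ⊆ closedBall (0:ℂ) 2 \ ball 0 1 := by
    intro w hw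
    rw [mem_sphere_zero_iff_norm] at hw
    rw [mem_ann, hw]; exact ⟨hr1, hr2⟩
  obtain ⟨v, hv, hv'⟩ := log_of_unbounded (α '' sphere 0 r)
    ((isCompact_sphere 0 r).image_of_continuousOn (hc.mono hsub)) p hb
  let e : ℝ → ℂ := fun θ => r * Complex.exp (θ * Complex.I)
  have hes : ∀ θ, e θ ∈ sphere (0:ℂ) r := by
    intro θ
    simp [e, Complex.norm_exp_ofReal_mul_I]; linarith
  have he : Continuous e := by fun_prop
  have hper : e (2 * Real.pi) = e 0 := by
    have : Complex.exp (((2 * Real.pi : ℝ) : ℂ) * Complex.I) = 1 := by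
      push_cast; exact Complex.exp_two_pi_mul_I
    simp only [e, this]; simp
  have hαe : Continuous (fun θ => α (e θ)) := hc.comp_continuous he (fun θ => hsub (hes θ))
  refine hn (no_periodic_log n ((r : ℂ) ^ n)
    (fun θ => v ⟨α (e θ), e θ, hes θ, rfl⟩ - g (α (e θ))) ?_ ?_ ?_)
  · refine Continuous.sub (hv.comp (Continuous.subtype_mk hαe _)) (hg.comp_continuous hαe ?_)
    exact fun θ => ⟨e θ, hsub (hes θ), rfl⟩
  · simp only [hper]
  · intro θ
    have h1 := hv' ⟨α (e θ), e θ, hes θ, rfl⟩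
    have h2 := hg' (e θ) (hsub (hes θ))
    rw [Complex.exp_sub, ← h1]
    simp only
    rw [h2, mul_div_assoc, div_self (Complex.exp_ne_zero _), mul_one, Complex.exp_int_mul,
      ← mul_zpow]

lemma polar_preconnected (I : Set ℝ) (hI : IsPreconnected I) (hI0 : ∀ r ∈ I, 0 ≤ r) :
    IsPreconnected {w : ℂ | ‖w‖ ∈ I} := by
  have : {w : ℂ | ‖w‖ ∈ I} =
      (fun a : ℝ × ℝ => (a.1 : ℂ) * Complex.exp (a.2 * Complex.I)) '' (I ×ˢ univ) := by
    ext w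
    constructor
    · intro hw
      exact ⟨(‖w‖, Complex.arg w), ⟨hw, mem_univ _⟩, Complex.norm_mul_exp_arg_mul_I w⟩
    · rintro ⟨⟨r, θ⟩, ⟨hr, -⟩, rfl⟩
      have := hI0 r hr
      simpa [Complex.norm_exp_ofReal_mul_I, abs_of_nonneg this] using hr
  rw [this]
  exact (hI.prod isPreconnected_univ).image _ (by fun_prop)

lemma ann_frontier_aux (hc : ContinuousOn α (closedBall 0 2 \ ball 0 1))
    (hi : Set.InjOn α (closedBall 0 2 \ ball 0 1)) (p : ℂ) (hp : p ∉ annCarrier α)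
    (U : Set ℂ) (hU : U = connectedComponentIn (annCarrier α)ᶜ p)
    (hb : IsBounded U) (r : ℝ) (hr1 : 1 ≤ r) (hr2 : r ≤ 2)
    (hE : IsPreconnected ((closedBall (0:ℂ) 2 \ ball 0 1) \ sphere 0 r)) :
    frontier U ⊆ α '' sphere 0 r ∨ frontier (annCarrier α ∪ U) ⊆ α '' sphere 0 r := by
  by_contra! hcon
  obtain ⟨h1, h2⟩ := hcon
  obtain ⟨x, hxU, hxC⟩ := not_subset.1 h1
  obtain ⟨y, hyU, hyC⟩ := not_subset.1 h2
  have hcl := (annCarrier_compact α hc).isClosed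
  have hUo : IsOpen U := hU ▸ hcl.isOpen_compl.connectedComponentIn
  have hfr : frontier U ⊆ annCarrier α := hU ▸ frontier_comp_subset _ hcl p
  have hpU : p ∈ U := hU ▸ mem_connectedComponentIn hp
  have hsub : sphere (0:ℂ) r ⊆ closedBall (0:ℂ) 2 \ ball 0 1 := by
    intro w hw
    rw [mem_sphere_zero_iff_norm] at hw
    rw [mem_ann, hw]; exact ⟨hr1, hr2⟩
  have hCA : α '' sphere 0 r ⊆ annCarrier α := image_mono hsub
  have hCc : IsClosed (α '' sphere 0 r) :=
    ((isCompact_sphere 0 r).image_of_continuousOn (hc.mono hsub)).isClosed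
  have hAUc : IsClosed (annCarrier α ∪ U) := by
    apply isClosed_of_closure_subset
    rw [closure_union, hcl.closure_eq]
    apply union_subset subset_union_left
    intro z hz
    by_cases hzU : z ∈ U
    · exact Or.inr hzU
    · exact Or.inl (hfr ⟨hz, by rwa [hUo.interior_eq]⟩)
  have hxA := hfr hxU
  have hyA : y ∈ annCarrier α := by
    rcases hAUc.frontier_subset hyU with h | h
    · exact h
    · exact absurd (interior_maximal subset_union_right hUo h) hyU.2
  have hEim : ∀ z ∈ annCarrier α, z ∉ α '' sphere 0 r →
      z ∈ α '' ((closedBall (0:ℂ) 2 \ ball 0 1) \ sphere 0 r) := by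
    rintro _ ⟨w, hw, rfl⟩ hz
    exact ⟨w, ⟨hw, fun h => hz ⟨w, h, rfl⟩⟩, rfl⟩
  have hEC : α '' ((closedBall (0:ℂ) 2 \ ball 0 1) \ sphere 0 r) ⊆ (α '' sphere 0 r)ᶜ := by
    rintro _ ⟨w, hw, rfl⟩ ⟨w', hw', h⟩
    exact hw.2 (hi (hsub hw') hw.1 h ▸ hw')
  have hEp : IsPreconnected (α '' ((closedBall (0:ℂ) 2 \ ball 0 1) \ sphere 0 r)) :=
    hE.image _ (hc.mono sdiff_subset)
  have hTb := circle_separates α hc hi p hp (hU ▸ hb) r hr1 hr2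
  have hTo : IsOpen (connectedComponentIn (α '' sphere 0 r)ᶜ p) :=
    hCc.isOpen_compl.connectedComponentIn
  have hcompl : (annCarrier α)ᶜ ⊆ (α '' sphere 0 r)ᶜ := compl_subset_compl.2 hCA
  have hUT : U ⊆ connectedComponentIn (α '' sphere 0 r)ᶜ p := by
    rw [hU]; exact connectedComponentIn_mono p hcompl
  have hxT : x ∈ connectedComponentIn (α '' sphere 0 r)ᶜ p := by
    by_contra hx
    exact hxC (frontier_comp_subset _ hCc p ⟨closure_mono hUT hxU.1, by rwa [hTo.interior_eq]⟩)
  have hET := hEp.subset_connectedComponentIn (hEim x hxA hxC) hEC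
  rw [← connectedComponentIn_eq hxT] at hET
  have hyT := hET (hEim y hyA hyC)
  have hyc : y ∈ closure (annCarrier α ∪ U)ᶜ := by
    rw [frontier_eq_closure_inter_closure] at hyU
    exact hyU.2
  obtain ⟨q, hqT, hq⟩ := mem_closure_iff.1 hyc _ hTo hyT
  have hqA : q ∉ annCarrier α := fun h => hq (Or.inl h)
  have hqU : q ∉ U := fun h => hq (Or.inr h)
  apply hqU
  rw [hU]
  refine bounded_comp_unique α hc hi p q hp hqA (hU ▸ hb) (hTb.subset ?_)
  rw [connectedComponentIn_eq hqT]
  exact connectedComponentIn_mono q hcompl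

lemma frontier_nonempty_of_bounded (S : Set ℂ) (hS : S.Nonempty) (hb : IsBounded S) :
    (frontier S).Nonempty := by
  rw [nonempty_iff_ne_empty]
  intro h
  rcases isClopen_iff.1 (isClopen_iff_frontier_eq_empty.2 h) with h | h
  · exact hS.ne_empty h
  · rw [h] at hb
    exact NormedSpace.unbounded_univ ℝ ℂ hb

lemma ann_frontier (hc : ContinuousOn α (closedBall 0 2 \ ball 0 1))
    (hi : Set.InjOn α (closedBall 0 2 \ ball 0 1))
    (U : Set ℂ) (hU : ∃ p ∈ (annCarrier α)ᶜ, U = connectedComponentIn (annCarrier α)ᶜ p)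
    (hb : IsBounded U) :
    (frontier U ⊆ α '' sphere 0 1 ∧ frontier (annCarrier α ∪ U) ⊆ α '' sphere 0 2) ∨
    (frontier U ⊆ α '' sphere 0 2 ∧ frontier (annCarrier α ∪ U) ⊆ α '' sphere 0 1) := by
  obtain ⟨p, hp, hU⟩ := hU
  have hpU : p ∈ U := hU ▸ mem_connectedComponentIn hp
  have e1 : (closedBall (0:ℂ) 2 \ ball 0 1) \ sphere 0 1 = {w : ℂ | ‖w‖ ∈ Ioc (1:ℝ) 2} := by
    ext w
    rw [mem_sdiff, mem_ann, mem_sphere_zero_iff_norm, mem_ofPred_eq, mem_Ioc]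
    constructor
    · rintro ⟨⟨h1, h2⟩, h3⟩; exact ⟨lt_of_le_of_ne h1 (Ne.symm h3), h2⟩
    · rintro ⟨h1, h2⟩; exact ⟨⟨h1.le, h2⟩, h1.ne'⟩
  have e2 : (closedBall (0:ℂ) 2 \ ball 0 1) \ sphere 0 2 = {w : ℂ | ‖w‖ ∈ Ico (1:ℝ) 2} := by
    ext w
    rw [mem_sdiff, mem_ann, mem_sphere_zero_iff_norm, mem_ofPred_eq, mem_Ico]
    constructor
    · rintro ⟨⟨h1, h2⟩, h3⟩; exact ⟨h1, lt_of_le_of_ne h2 h3⟩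
    · rintro ⟨h1, h2⟩; exact ⟨⟨h1, h2.le⟩, h2.ne⟩
  have a1 := ann_frontier_aux α hc hi p hp U hU hb 1 le_rfl (by norm_num)
    (e1 ▸ polar_preconnected _ isPreconnected_Ioc (fun r hr => by linarith [hr.1]))
  have a2 := ann_frontier_aux α hc hi p hp U hU hb 2 (by norm_num) le_rfl
    (e2 ▸ polar_preconnected _ isPreconnected_Ico (fun r hr => by linarith [hr.1]))
  have hdis : ∀ z, z ∈ α '' sphere 0 1 → z ∈ α '' sphere 0 2 → False := by
    rintro _ ⟨w, hw, rfl⟩ ⟨w', hw', h⟩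
    rw [mem_sphere_zero_iff_norm] at hw hw'
    have := hi (mem_ann.2 ⟨by linarith, by linarith⟩) (mem_ann.2 ⟨by linarith, by linarith⟩) h
    rw [this] at hw'; linarith
  obtain ⟨x, hx⟩ := frontier_nonempty_of_bounded U ⟨p, hpU⟩ hb
  obtain ⟨y, hy⟩ := frontier_nonempty_of_bounded (annCarrier α ∪ U) ⟨p, Or.inr hpU⟩
    ((annCarrier_compact α hc).isBounded.union hb)
  rcases a1 with a1 | a1 <;> rcases a2 with a2 | a2
  · exact (hdis x (a1 hx) (a2 hx)).elim
  · exact Or.inl ⟨a1, a2⟩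
  · exact Or.inr ⟨a2, a1⟩
  · exact (hdis y (a1 hy) (a2 hy)).elim

end annulus

/-! ### Curves -/

lemma affine_reparam (γ : ℝ → ℂ) (hγ : IsCurve γ) (c d : ℝ) (hd : d ≠ 0)
    (hI : ∀ t ∈ Ioo (0:ℝ) 1, c + d * t ∈ Ioo (0:ℝ) 1)
    (hIc : ∀ t ∈ Icc (0:ℝ) 1, c + d * t ∈ Icc (0:ℝ) 1) (ρ : ℂ → ℝ≥0∞) :
    IsCurve (fun t => γ (c + d * t)) ∧
    ∫⁻ t in Ioo (0:ℝ) 1, ρ (γ (c + d * t)) * (‖deriv (fun t => γ (c + d * t)) t‖₊ : ℝ≥0∞)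
      ≤ ∫⁻ t in Ioo (0:ℝ) 1, ρ (γ t) * (‖deriv γ t‖₊ : ℝ≥0∞) := by
  refine ⟨⟨hγ.1.comp (by fun_prop) hIc, hγ.2.comp (by fun_prop) hI⟩, ?_⟩
  have hder : ∀ t : ℝ, HasDerivAt (fun t : ℝ => c + d * t) d t := by
    intro t
    simpa using ((hasDerivAt_id t).const_mul d).const_add c
  have key := lintegral_image_eq_lintegral_abs_deriv_mul (s := Ioo (0:ℝ) 1)
    (f := fun t => c + d * t) (f' := fun _ => d) measurableSet_Ioo
    (fun t _ => (hder t).hasDerivWithinAt)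
    (fun x _ y _ h => by simpa [hd] using h)
    (fun t => ρ (γ t) * (‖deriv γ t‖₊ : ℝ≥0∞))
  calc _ = ∫⁻ t in Ioo (0:ℝ) 1, ENNReal.ofReal |d| *
        (ρ (γ (c + d * t)) * (‖deriv γ (c + d * t)‖₊ : ℝ≥0∞)) := by
        refine setLIntegral_congr_fun measurableSet_Ioo (fun t ht => ?_)
        have hdiff : DifferentiableAt ℝ γ (c + d * t) :=
          (hγ.2.contDiffAt (isOpen_Ioo.mem_nhds (hI t ht))).differentiableAt (by norm_num)
        have h1 : deriv (fun t => γ (c + d * t)) t = d • deriv γ (c + d * t) :=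
          (hdiff.hasDerivAt.scomp t (hder t)).deriv
        have h2 : ENNReal.ofReal |d| = (‖d‖₊ : ℝ≥0∞) := by
          rw [← Real.norm_eq_abs, ofReal_norm]; rfl
        simp only [h1, nnnorm_smul, ENNReal.coe_mul, h2]
        ring
    _ = _ := key.symm
    _ ≤ _ := by
        apply lintegral_mono_set
        rintro _ ⟨t, ht, rfl⟩
        exact hI t ht

lemma crossing_length (γ : ℝ → ℂ) (hγ : IsCurve γ) (S X Y : Set ℂ) (s : ℝ) (hs0 : 0 < s)
    (hs1 : s ≤ 1) (hS : ∀ t ∈ Icc (0:ℝ) s, γ t ∈ S)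
    (hXY : (γ 0 ∈ X ∧ γ s ∈ Y) ∨ (γ 0 ∈ Y ∧ γ s ∈ X)) (ρ : ℂ → ℝ≥0∞)
    (hρ : ∀ γ ∈ curveFamily S X Y,
      1 ≤ ∫⁻ t in Ioo (0:ℝ) 1, ρ (γ t) * (‖deriv γ t‖₊ : ℝ≥0∞)) :
    1 ≤ ∫⁻ t in Ioo (0:ℝ) 1, ρ (γ t) * (‖deriv γ t‖₊ : ℝ≥0∞) := by
  rcases hXY with ⟨hX, hY⟩ | ⟨hY, hX⟩
  · obtain ⟨h1, h2⟩ := affine_reparam γ hγ 0 s hs0.ne'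
      (fun t ht => ⟨by nlinarith [ht.1], by nlinarith [ht.1, ht.2]⟩)
      (fun t ht => ⟨by nlinarith [ht.1], by nlinarith [ht.1, ht.2]⟩) ρ
    refine (hρ _ ⟨h1, fun t ht => hS _ ⟨?_, ?_⟩, ?_, ?_⟩).trans h2
    · nlinarith [ht.1]
    · nlinarith [ht.1, ht.2]
    · simpa using hX
    · simpa using hY
  · obtain ⟨h1, h2⟩ := affine_reparam γ hγ s (-s) (by linarith)
      (fun t ht => ⟨by nlinarith [ht.1, ht.2], by nlinarith [ht.1, ht.2]⟩)
      (fun t ht => ⟨by nlinarith [ht.1, ht.2], by nlinarith [ht.1, ht.2]⟩) ρ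
    refine (hρ _ ⟨h1, fun t ht => hS _ ⟨?_, ?_⟩, ?_, ?_⟩).trans h2
    · nlinarith [ht.1, ht.2]
    · nlinarith [ht.1, ht.2]
    · simpa using hX
    · simpa using hY

lemma curve_crosses (α : ℂ → ℂ) (hc : ContinuousOn α (closedBall 0 2 \ ball 0 1))
    (hi : Set.InjOn α (closedBall 0 2 \ ball 0 1))
    (U : Set ℂ) (hU : ∃ p ∈ (annCarrier α)ᶜ, U = connectedComponentIn (annCarrier α)ᶜ p)
    (hb : IsBounded U) (γ : ℝ → ℂ) (hγ : IsCurve γ) (h0 : γ 0 ∈ frontier U)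
    (hγU : ∀ t ∈ Icc (0:ℝ) 1, γ t ∉ U) (h1 : γ 1 ∉ interior (annCarrier α ∪ U))
    (ρ : ℂ → ℝ≥0∞)
    (hρ : ∀ γ ∈ curveFamily (annCarrier α) (α '' sphere 0 1) (α '' sphere 0 2),
      1 ≤ ∫⁻ t in Ioo (0:ℝ) 1, ρ (γ t) * (‖deriv γ t‖₊ : ℝ≥0∞)) :
    1 ≤ ∫⁻ t in Ioo (0:ℝ) 1, ρ (γ t) * (‖deriv γ t‖₊ : ℝ≥0∞) := by
  have hfr := ann_frontier α hc hi U hU hb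
  have hcl := (annCarrier_compact α hc).isClosed
  have hfrA : frontier U ⊆ annCarrier α := by
    obtain ⟨p, hp, rfl⟩ := hU
    exact frontier_comp_subset _ hcl p
  have hT : IsCompact (Icc (0:ℝ) 1 ∩ γ ⁻¹' (interior (annCarrier α ∪ U))ᶜ) :=
    isCompact_Icc.of_isClosed_subset
      (hγ.1.preimage_isClosed_of_isClosed isClosed_Icc isOpen_interior.isClosed_compl)
      inter_subset_left
  obtain ⟨s, ⟨hs, hsT⟩, hmin⟩ := hT.exists_isLeast ⟨1, ⟨by norm_num, h1⟩⟩
  have hlt : ∀ t ∈ Ico (0:ℝ) s, γ t ∈ annCarrier α := by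
    intro t ht
    have ht1 : t ∈ Icc (0:ℝ) 1 := ⟨ht.1, ht.2.le.trans hs.2⟩
    have : γ t ∈ interior (annCarrier α ∪ U) := by
      by_contra hcon
      exact absurd (hmin ⟨ht1, hcon⟩) (not_le.2 ht.2)
    exact (interior_subset this).resolve_right (hγU t ht1)
  have hle : ∀ t ∈ Icc (0:ℝ) s, γ t ∈ annCarrier α := by
    intro t ht
    rcases ht.1.eq_or_lt with h | h
    · rw [← h]; exact hfrA h0
    · have hs0 : (0:ℝ) ≠ s := (h.trans_le ht.2).ne
      have hm : MapsTo γ (closure (Ico (0:ℝ) s)) (closure (annCarrier α)) := by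
        apply MapsTo.closure_of_continuousOn (fun t ht => hlt t ht)
        rw [closure_Ico hs0]
        exact hγ.1.mono (Icc_subset_Icc le_rfl hs.2)
      rw [closure_Ico hs0, hcl.closure_eq] at hm
      exact hm ht
  have hsF : γ s ∈ frontier (annCarrier α ∪ U) :=
    ⟨subset_closure (Or.inl (hle s ⟨hs.1, le_rfl⟩)), hsT⟩
  have hdis : ∀ z, z ∈ α '' sphere 0 1 → z ∈ α '' sphere 0 2 → False := by
    rintro _ ⟨w, hw, rfl⟩ ⟨w', hw', h⟩
    rw [mem_sphere_zero_iff_norm] at hw hw'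
    have := hi (mem_ann.2 ⟨by linarith, by linarith⟩) (mem_ann.2 ⟨by linarith, by linarith⟩) h
    rw [this] at hw'; linarith
  have hXY : (γ 0 ∈ α '' sphere 0 1 ∧ γ s ∈ α '' sphere 0 2) ∨
      (γ 0 ∈ α '' sphere 0 2 ∧ γ s ∈ α '' sphere 0 1) := by
    rcases hfr with ⟨a, b⟩ | ⟨a, b⟩
    · exact Or.inl ⟨a h0, b hsF⟩
    · exact Or.inr ⟨a h0, b hsF⟩
  have hs0 : 0 < s := by
    rcases hs.1.eq_or_lt with h | h
    · rw [← h] at hXY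
      rcases hXY with ⟨a, b⟩ | ⟨a, b⟩
      · exact (hdis _ a b).elim
      · exact (hdis _ b a).elim
    · exact h
  exact crossing_length γ hγ _ _ _ s hs0 hs.2 hle hXY ρ hρ

lemma extremalWidth_le_add (F F₁ F₂ : Set (ℝ → ℂ))
    (h : ∀ γ ∈ F, ∀ ρ₁ ρ₂ : ℂ → ℝ≥0∞,
      (∀ δ ∈ F₁, 1 ≤ ∫⁻ t in Ioo (0:ℝ) 1, ρ₁ (δ t) * (‖deriv δ t‖₊ : ℝ≥0∞)) →
      (∀ δ ∈ F₂, 1 ≤ ∫⁻ t in Ioo (0:ℝ) 1, ρ₂ (δ t) * (‖deriv δ t‖₊ : ℝ≥0∞)) →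
      1 ≤ ∫⁻ t in Ioo (0:ℝ) 1, ρ₁ (γ t) * (‖deriv γ t‖₊ : ℝ≥0∞) ∨
      1 ≤ ∫⁻ t in Ioo (0:ℝ) 1, ρ₂ (γ t) * (‖deriv γ t‖₊ : ℝ≥0∞)) :
    extremalWidth F ≤ extremalWidth F₁ + extremalWidth F₂ := by
  rw [← tsub_le_iff_right]
  refine le_iInf₂ fun ρ₁ h₁ => ?_
  rw [tsub_le_iff_left, ← tsub_le_iff_right]
  refine le_iInf₂ fun ρ₂ h₂ => ?_
  rw [tsub_le_iff_left]
  have hm : Measurable (fun z => max (ρ₁ z) (ρ₂ z)) := h₁.1.max h₂.1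
  have hadm : ∀ γ ∈ F,
      1 ≤ ∫⁻ t in Ioo (0:ℝ) 1, max (ρ₁ (γ t)) (ρ₂ (γ t)) * (‖deriv γ t‖₊ : ℝ≥0∞) := by
    intro γ hγ
    rcases h γ hγ ρ₁ ρ₂ h₁.2 h₂.2 with h | h
    · refine h.trans (lintegral_mono fun t => ?_)
      gcongr
      exact le_max_left _ _
    · refine h.trans (lintegral_mono fun t => ?_)
      gcongr
      exact le_max_right _ _
  refine (iInf₂_le (fun z => max (ρ₁ z) (ρ₂ z)) ⟨hm, hadm⟩).trans ?_
  · rw [← lintegral_add_left (h₁.1.pow_const 2)]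
    refine lintegral_mono fun z => ?_
    rcases le_total (ρ₁ z) (ρ₂ z) with h | h
    · simp only [max_eq_right h]; exact le_add_self
    · simp only [max_eq_left h]; exact le_self_add

/-- **Enclosed annuli.** If `A`, `B` are closed topological annuli of moduli `≥ 2ε`
enclosing bounded complementary components `U`, `V` such that `U ∪ V` is an open
topological disk and `A ∪ U ∪ B ∪ V` is a closed Jordan disk, then the enclosed annulus
`A □ B = (A ∪ U ∪ B ∪ V) ∖ (U ∪ V)` has modulus at least `ε`: the width of the family of
curves in it joining its inner to its outer boundary is at most `1/ε`. -/
theorem enclosed_annuli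
    (ε : ℝ) (hε : 0 < ε)
    (αA αB : ℂ → ℂ)
    (hAc : ContinuousOn αA (closedBall 0 2 \ ball 0 1))
    (hAi : Set.InjOn αA (closedBall 0 2 \ ball 0 1))
    (hBc : ContinuousOn αB (closedBall 0 2 \ ball 0 1))
    (hBi : Set.InjOn αB (closedBall 0 2 \ ball 0 1))
    (U V : Set ℂ)
    (hU : ∃ z ∈ (annCarrier αA)ᶜ, U = connectedComponentIn (annCarrier αA)ᶜ z)
    (hUb : IsBounded U)
    (hV : ∃ z ∈ (annCarrier αB)ᶜ, V = connectedComponentIn (annCarrier αB)ᶜ z)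
    (hVb : IsBounded V)
    (hopen : IsOpen (U ∪ V))
    (hdisc : Nonempty (↥(U ∪ V) ≃ₜ (ℝ × ℝ)))
    (hjordan : ∃ φ : ℂ → ℂ, ContinuousOn φ (closedBall 0 1) ∧
        Set.InjOn φ (closedBall 0 1) ∧
        annCarrier αA ∪ U ∪ annCarrier αB ∪ V = φ '' closedBall 0 1)
    (hmA : ENNReal.ofReal (2 * ε) ≤ annModulus αA)
    (hmB : ENNReal.ofReal (2 * ε) ≤ annModulus αB) :
    widthIn ((annCarrier αA ∪ U ∪ annCarrier αB ∪ V) \ (U ∪ V))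
        (frontier (U ∪ V)) (frontier (annCarrier αA ∪ U ∪ annCarrier αB ∪ V))
      ≤ ENNReal.ofReal (1 / ε) := by
  have hA : widthIn (annCarrier αA) (αA '' sphere 0 1) (αA '' sphere 0 2)
      ≤ (ENNReal.ofReal (2 * ε))⁻¹ := ENNReal.le_inv_iff_le_inv.1 hmA
  have hB : widthIn (annCarrier αB) (αB '' sphere 0 1) (αB '' sphere 0 2)
      ≤ (ENNReal.ofReal (2 * ε))⁻¹ := ENNReal.le_inv_iff_le_inv.1 hmB
  have hsum : (ENNReal.ofReal (2 * ε))⁻¹ + (ENNReal.ofReal (2 * ε))⁻¹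
      = ENNReal.ofReal (1 / ε) := by
    rw [← ENNReal.ofReal_inv_of_pos (by positivity), ← ENNReal.ofReal_add (by positivity)
      (by positivity)]
    congr 1
    field_simp
    norm_num
  refine (extremalWidth_le_add _ _ _ ?_).trans ((add_le_add hA hB).trans hsum.le)
  rintro γ ⟨hγ, hS, h0, h1⟩ ρ₁ ρ₂ hρ₁ hρ₂
  have hfr : γ 0 ∈ frontier U ∨ γ 0 ∈ frontier V := by
    rcases frontier_union_subset U V h0 with h | h
    · exact Or.inl h.1
    · exact Or.inr h.2
  rcases hfr with h | h
  · left
    refine curve_crosses αA hAc hAi U hU hUb γ hγ h (fun t ht hh => (hS t ht).2 (Or.inl hh)) ?_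
      ρ₁ hρ₁
    exact fun hh => h1.2 (interior_mono (fun z hz => Or.inl (Or.inl hz)) hh)
  · right
    refine curve_crosses αB hBc hBi V hV hVb γ hγ h (fun t ht hh => (hS t ht).2 (Or.inr hh)) ?_
      ρ₂ hρ₂
    refine fun hh => h1.2 (interior_mono ?_ hh)
    rintro z (hz | hz)
    · exact Or.inl (Or.inr hz)
    · exact Or.inr hz
end
end
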